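/- arXiv:1908.09660 — 6 statements merged into one kernel-verified Lean document; each statement's English description precedes it below -/
import Mathlib

section
/- Let V : ℝⁿ → [0,∞) be a finite-step control Lyapunov function for time step M with respect to a measurement function ω, and let q : X → U^M be the admissible finite-step feedback control law associated with V. Then q asymptotically ω-stabilizes the set A := ω⁻¹(0) for the system, i.e., there exists a class-KL function β such that ω(x_q(t,ξ)) ≤ β(ω(ξ), t) for all ξ ∈ X and all t ∈ ℕ. -/
open Filter Finset NNReal

noncomputable section

/-- A class-K function on `[0,∞)`: continuous, strictly increasing, zero at zero. -/
def ClassK (κ : ℝ≥0 → ℝ≥0) : Prop :=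
  Continuous κ ∧ StrictMono κ ∧ κ 0 = 0

/-- A class-K∞ function: class K and unbounded. -/
def ClassKInf (κ : ℝ≥0 → ℝ≥0) : Prop :=
  ClassK κ ∧ Filter.Tendsto κ Filter.atTop Filter.atTop

/-- A class-KL function. -/
def ClassKL (β : ℝ≥0 → ℝ≥0 → ℝ≥0) : Prop :=
  Continuous (fun p : ℝ≥0 × ℝ≥0 => β p.1 p.2) ∧
  (∀ s : ℝ≥0, ClassK fun r => β r s) ∧
  (∀ r : ℝ≥0, Antitone (fun s => β r s) ∧
    Filter.Tendsto (fun s => β r s) Filter.atTop (nhds 0))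

/-- The iterates `g^j(ξ, u)` of the control system `x⁺ = g(x,u)` under the
control sequence `u` starting from `ξ`. -/
def iter {n m : ℕ} (g : (Fin n → ℝ) → (Fin m → ℝ) → (Fin n → ℝ)) (ξ : Fin n → ℝ)
    (u : ℕ → Fin m → ℝ) : ℕ → Fin n → ℝ
  | 0 => ξ
  | j + 1 => g (iter g ξ u j) (u j)

/-- `q : X → U^M` is an admissible finite-step feedback control law (afcl) of length `M`
for the system `g` with state constraint set `X`, input constraint set `U` and
measurement function `ω`. -/
def IsAfcl {n m : ℕ} (ω : (Fin n → ℝ) → ℝ≥0) (X : Set (Fin n → ℝ)) (U : Set (Fin m → ℝ))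
    (g : (Fin n → ℝ) → (Fin m → ℝ) → (Fin n → ℝ)) (M : ℕ)
    (q : (Fin n → ℝ) → ℕ → Fin m → ℝ) : Prop :=
  (∀ ξ ∈ X, ∀ j < M, q ξ j ∈ U) ∧
  (∀ ξ ∈ X, ∀ j : ℕ, 1 ≤ j → j ≤ M → iter g ξ (q ξ) j ∈ X) ∧
  (∀ j : ℕ, 1 ≤ j → j ≤ M → ∃ κ : ℝ≥0 → ℝ≥0, ClassK κ ∧
    ∀ ξ ∈ X, ω (iter g ξ (q ξ) j) ≤ κ (ω ξ))

/-- States of the closed loop under the `M`-step feedback `q` at time instants `kM`. -/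
def loopBase {n m : ℕ} (g : (Fin n → ℝ) → (Fin m → ℝ) → (Fin n → ℝ)) (M : ℕ)
    (q : (Fin n → ℝ) → ℕ → Fin m → ℝ) (ξ : Fin n → ℝ) : ℕ → Fin n → ℝ
  | 0 => ξ
  | k + 1 => iter g (loopBase g M q ξ k) (q (loopBase g M q ξ k)) M

/-- The closed-loop trajectory `x_q(t, ξ)`: for `t = kM + j`, `j ∈ {0,…,M-1}`,
`x_q(kM + j) = g^j(x_q(kM), q(x_q(kM)))`. -/
def closedLoop {n m : ℕ} (g : (Fin n → ℝ) → (Fin m → ℝ) → (Fin n → ℝ)) (M : ℕ)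
    (q : (Fin n → ℝ) → ℕ → Fin m → ℝ) (ξ : Fin n → ℝ) (t : ℕ) : Fin n → ℝ :=
  iter g (loopBase g M q ξ (t / M)) (q (loopBase g M q ξ (t / M))) (t % M)

theorem exists_KL (c : ℕ → ℝ≥0 → ℝ≥0) (hK : ∀ k, ClassK (c k)) (hanti : ∀ r, Antitone fun k => c k r)
    (hlim : ∀ r, Tendsto (fun k => c k r) atTop (nhds 0)) :
    ∃ β : ℝ≥0 → ℝ≥0 → ℝ≥0, ClassKL β ∧ ∀ r (t : ℕ), c t r ≤ β r (t : ℝ≥0) := by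
  set F : ℕ → ℝ≥0 → ℝ≥0 → ℝ≥0 := fun N r s =>
    (Finset.range (N + 1)).sup (fun k => c k r * (1 - (s - (k : ℝ≥0)))) with hF
  have hterm : ∀ N r s k, k ≤ N → c k r * (1 - (s - (k : ℝ≥0))) ≤ F N r s := by
    intro N r s k hk
    exact Finset.le_sup (f := fun k => c k r * (1 - (s - (k : ℝ≥0)))) (by simp; omega)
  have hceil : ∀ (s : ℝ≥0) (k : ℕ), s ≤ k → (1 : ℝ≥0) - (s - (k : ℝ≥0)) = 1 := by
    intro s k h
    simp [tsub_eq_zero_of_le h]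
  have hw : ∀ (s : ℝ≥0) (k : ℕ), (1 : ℝ≥0) - (s - (k : ℝ≥0)) ≤ 1 := fun s k => tsub_le_self
  have hbig : ∀ (N : ℕ) r s, s ≤ (N : ℝ≥0) → F ⌈s⌉₊ r s = F N r s := by
    intro N r s h
    have hN : ⌈s⌉₊ ≤ N := Nat.ceil_le.2 h
    apply le_antisymm
    · apply Finset.sup_mono
      intro k
      simp only [Finset.mem_range]
      omega
    · apply Finset.sup_le
      intro k _
      rcases le_total k ⌈s⌉₊ with h1 | h1
      · exact hterm _ r s k h1
      · calc c k r * (1 - (s - (k : ℝ≥0))) ≤ c ⌈s⌉₊ r * 1 := mul_le_mul' (hanti r h1) (hw s k)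
          _ = c ⌈s⌉₊ r * (1 - (s - (⌈s⌉₊ : ℝ≥0))) := by rw [hceil _ _ (Nat.le_ceil s)]
          _ ≤ _ := hterm _ r s _ le_rfl
  have hlow : ∀ r s, c ⌈s⌉₊ r ≤ F ⌈s⌉₊ r s := by
    intro r s
    have := hterm ⌈s⌉₊ r s _ le_rfl
    rwa [hceil _ _ (Nat.le_ceil s), mul_one] at this
  have hup : ∀ r s, F ⌈s⌉₊ r s ≤ c ⌊s⌋₊ r := by
    intro r s
    apply Finset.sup_le
    intro k _
    rcases le_or_gt ⌊s⌋₊ k with h1 | h1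
    · calc c k r * (1 - (s - (k : ℝ≥0))) ≤ c ⌊s⌋₊ r * 1 := mul_le_mul' (hanti r h1) (hw s k)
        _ = _ := mul_one _
    · have h2 : ((k + 1 : ℕ) : ℝ≥0) ≤ s := (Nat.le_floor_iff (zero_le)).1 h1
      have h3 : (1 : ℝ≥0) - (s - (k : ℝ≥0)) = 0 := by
        apply tsub_eq_zero_of_le
        apply le_tsub_of_add_le_left
        exact_mod_cast h2
      simp [h3]
  have hFc : ∀ N, Continuous (fun p : ℝ≥0 × ℝ≥0 => F N p.1 p.2) := by
    intro N
    apply Continuous.finset_sup_apply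
    intro k _
    have := (hK k).1
    fun_prop
  refine ⟨fun r s => F ⌈s⌉₊ r s, ⟨?_, ?_, ?_⟩, ?_⟩
  · rw [continuous_iff_continuousAt]
    rintro ⟨r, s⟩
    obtain ⟨N, hN⟩ := exists_nat_gt s
    refine ((hFc N).continuousAt).congr ?_
    have : ∀ᶠ p : ℝ≥0 × ℝ≥0 in nhds (r, s), p.2 < N :=
      (continuous_snd.continuousAt).eventually (gt_mem_nhds hN)
    filter_upwards [this] with p hp
    exact (hbig N p.1 p.2 hp.le).symm
  · intro s
    refine ⟨(hFc ⌈s⌉₊).comp (by fun_prop : Continuous fun r : ℝ≥0 => (r, s)), ?_, ?_⟩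
    · intro r r' hr
      have hpos : 0 < F ⌈s⌉₊ r' s :=
        lt_of_lt_of_le (lt_of_le_of_lt (zero_le) ((hK ⌈s⌉₊).2.1 hr)) (hlow r' s)
      show F ⌈s⌉₊ r s < F ⌈s⌉₊ r' s
      refine (Finset.sup_lt_iff (by simpa using hpos)).2 ?_
      intro k hk
      rcases eq_or_ne ((1 : ℝ≥0) - (s - (k : ℝ≥0))) 0 with h0 | h0
      · simpa [h0] using hpos
      · refine lt_of_lt_of_le ?_ (hterm ⌈s⌉₊ r' s k (by simp at hk; omega))
        exact mul_lt_mul_of_pos_right ((hK k).2.1 hr) (pos_iff_ne_zero.2 h0)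
    · have := hup 0 s
      rw [(hK _).2.2] at this
      exact le_antisymm this (zero_le)
  · intro r
    constructor
    · intro s s' hs
      show F ⌈s'⌉₊ r s' ≤ F ⌈s⌉₊ r s
      rw [hbig ⌈s'⌉₊ r s (hs.trans (Nat.le_ceil _))]
      apply Finset.sup_mono_fun
      intro k _
      gcongr
    · refine tendsto_of_tendsto_of_tendsto_of_le_of_le tendsto_const_nhds
        ((hlim r).comp (tendsto_nat_floor_atTop (α := ℝ≥0))) (fun s => zero_le) (fun s => hup r s)
  · intro r t
    have := hlow r (t : ℝ≥0)
    simpa using this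

theorem iterate_antitone (α : ℝ≥0 → ℝ≥0) (hα : ClassK α) (hlt : ∀ s : ℝ≥0, 0 < s → α s < s) (s : ℝ≥0) :
    Antitone (fun k => α^[k] s) := by
  apply antitone_nat_of_succ_le
  intro k
  rw [Function.iterate_succ_apply']
  rcases eq_or_ne (α^[k] s) 0 with h | h
  · rw [h, hα.2.2]
  · exact (hlt _ (pos_iff_ne_zero.2 h)).le

theorem iterate_tendsto (α : ℝ≥0 → ℝ≥0) (hα : ClassK α) (hlt : ∀ s : ℝ≥0, 0 < s → α s < s) (s : ℝ≥0) :
    Tendsto (fun k => α^[k] s) atTop (nhds 0) := by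
  have h := tendsto_atTop_ciInf (iterate_antitone α hα hlt s) (OrderBot.bddBelow _)
  have hfix := isFixedPt_of_tendsto_iterate h hα.1.continuousAt
  rcases eq_or_ne (⨅ k, α^[k] s) 0 with h0 | h0
  · rwa [h0] at h
  · exact absurd hfix (hlt _ (pos_iff_ne_zero.2 h0)).ne

theorem ClassK.comp {a b : ℝ≥0 → ℝ≥0} (ha : ClassK a) (hb : ClassK b) : ClassK (fun r => a (b r)) :=
  ⟨ha.1.comp hb.1, ha.2.1.comp hb.2.1, by simp [hb.2.2, ha.2.2]⟩

theorem ClassK.iterate {a : ℝ≥0 → ℝ≥0} (ha : ClassK a) (k : ℕ) : ClassK (a^[k]) :=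
  ⟨ha.1.iterate k, ha.2.1.iterate k, Function.iterate_fixed ha.2.2 k⟩

theorem ClassKInf.exists_inv {a : ℝ≥0 → ℝ≥0} (ha : ClassKInf a) :
    ∃ b, ClassK b ∧ ∀ r s, a r ≤ s → r ≤ b s := by
  have hs : Function.Surjective a := by
    apply ha.1.1.surjective ha.2
    rw [OrderBot.atBot_eq, tendsto_pure_left]
    intro t ht
    have : a ⊥ = ⊥ := ha.1.2.2
    rw [this]
    exact ht
  let e := ha.1.2.1.orderIsoOfSurjective a hs
  refine ⟨e.symm, ⟨e.symm.continuous, e.symm.strictMono, e.symm.map_bot⟩, ?_⟩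
  intro r s h
  exact (e.le_symm_apply).2 h

/-- Proposition: an fs-CLF together with its associated afcl
asymptotically ω-stabilizes `A = ω⁻¹(0)`. -/
theorem fsclf_afcl_stabilizes {n m : ℕ}
    (X : Set (Fin n → ℝ)) (U : Set (Fin m → ℝ))
    (g : (Fin n → ℝ) → (Fin m → ℝ) → (Fin n → ℝ))
    (hg : ContinuousOn (fun p : (Fin n → ℝ) × (Fin m → ℝ) => g p.1 p.2) (X ×ˢ U))
    (ω : (Fin n → ℝ) → ℝ≥0) (hω : Continuous ω) (hωzero : ∃ x, ω x = 0)
    (M : ℕ) (hM : 1 ≤ M)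
    (V : (Fin n → ℝ) → ℝ≥0) (hV : Continuous V)
    (ulα olα : ℝ≥0 → ℝ≥0) (hulα : ClassKInf ulα) (holα : ClassKInf olα)
    (hsandwich : ∀ ξ, ulα (ω ξ) ≤ V ξ ∧ V ξ ≤ olα (ω ξ))
    (q : (Fin n → ℝ) → ℕ → Fin m → ℝ) (hq : IsAfcl ω X U g M q)
    (α : ℝ≥0 → ℝ≥0) (hα : ClassKInf α) (hαlt : ∀ s : ℝ≥0, 0 < s → α s < s)
    (hdecay : ∀ ξ ∈ X, V (iter g ξ (q ξ) M) ≤ α (V ξ)) :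
    ∃ β : ℝ≥0 → ℝ≥0 → ℝ≥0, ClassKL β ∧
      ∀ ξ ∈ X, ∀ t : ℕ, ω (closedLoop g M q ξ t) ≤ β (ω ξ) (t : ℝ≥0) := by
  obtain ⟨_, hqX, hqK⟩ := hq
  have hbase : ∀ ξ ∈ X, ∀ k, loopBase g M q ξ k ∈ X := by
    intro ξ hξ k
    induction k with
    | zero => exact hξ
    | succ k ih => exact hqX _ ih M hM le_rfl
  have hVk : ∀ ξ ∈ X, ∀ k, V (loopBase g M q ξ k) ≤ α^[k] (V ξ) := by
    intro ξ hξ k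
    induction k with
    | zero => exact le_rfl
    | succ k ih =>
      rw [Function.iterate_succ_apply']
      exact (hdecay _ (hbase ξ hξ k)).trans (hα.1.2.1.monotone ih)
  have hKall : ∀ N ≤ M, ∃ K : ℝ≥0 → ℝ≥0, ClassK K ∧
      ∀ j ≤ N, ∀ ξ ∈ X, ω (iter g ξ (q ξ) j) ≤ K (ω ξ) := by
    intro N
    induction N with
    | zero =>
      intro _
      refine ⟨fun r => r, ⟨continuous_id, strictMono_id, rfl⟩, ?_⟩
      intro j hj ξ _
      obtain rfl : j = 0 := by omega
      exact le_rfl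
    | succ N ih =>
      intro hN
      obtain ⟨K, hK, hKb⟩ := ih (by omega)
      obtain ⟨κ, hκ, hκb⟩ := hqK (N + 1) (by omega) hN
      refine ⟨fun r => K r + κ r, ⟨hK.1.add hκ.1, hK.2.1.add hκ.2.1, by simp [hK.2.2, hκ.2.2]⟩, ?_⟩
      intro j hj ξ hξ
      rcases Nat.lt_or_ge N j with h | h
      · obtain rfl : j = N + 1 := by omega
        exact (hκb ξ hξ).trans le_add_self
      · exact (hKb j h ξ hξ).trans le_self_add
  obtain ⟨K, hK, hKb⟩ := hKall M le_rfl
  obtain ⟨b, hb, hbb⟩ := hulα.exists_inv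
  have hKbK : ClassK (fun r => K (b r)) := hK.comp hb
  obtain ⟨β, hβ, hβb⟩ := exists_KL (fun t r => K (b (α^[t / M] (olα r))))
    (fun t => hKbK.comp ((hα.1.iterate (t / M)).comp holα.1))
    (fun r t t' h => hKbK.2.1.monotone
      (iterate_antitone α hα.1 hαlt (olα r) (Nat.div_le_div_right h)))
    (fun r => by
      have h1 : Tendsto (fun r => K (b r)) (nhds 0) (nhds 0) := by
        have := hKbK.1.tendsto 0
        rwa [show K (b 0) = 0 from hKbK.2.2] at this
      exact h1.comp ((iterate_tendsto α hα.1 hαlt (olα r)).comp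
        (Nat.tendsto_div_const_atTop (by omega))))
  refine ⟨β, hβ, ?_⟩
  intro ξ hξ t
  refine le_trans ?_ (hβb (ω ξ) t)
  refine (hKb (t % M) (Nat.mod_lt _ hM).le _ (hbase ξ hξ (t / M))).trans ?_
  apply hK.2.1.monotone
  apply hbb
  refine (hsandwich _).1.trans ((hVk ξ hξ _).trans ?_)
  exact (hα.1.iterate _).2.1.monotone (hsandwich ξ).2
end
end

section
/- Let ω be a measurement function and let V be a finite-step control Lyapunov function for time step M with sandwich bounds ulα(ω(ξ)) ≤ V(ξ) ≤ olα(ω(ξ)), decay function α and associated afcl q (with class-K functions κ_i satisfying ω(g^i(ξ,q(ξ))) ≤ κ_i(ω(ξ))). Let h : X → U^M be any map satisfying, for all ξ ∈ X and j = 1,…,M: g^j(ξ, h(ξ)) ∈ X, all components of h(ξ) lie in U, the terminal contraction V(g^M(ξ, h(ξ))) ≤ α(V(ξ)), and the cost-domination inequality Σ_{i=0}^{M−1} V(x(i,ξ,h(ξ))) ≤ Σ_{i=0}^{M−1} V(x(i,ξ,q(ξ))). Then h is an admissible finite-step feedback control law; in particular, for j = 1,…,M−1 one has ω(g^j(ξ,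 h(ξ))) ≤ ulα⁻¹( Σ_{i=0}^{M−1} olα(κ_i(ω(ξ))) ) (with κ_0 := id), and for j = M one has ω(g^M(ξ, h(ξ))) ≤ ulα⁻¹(α(olα(ω(ξ)))), and each of these bounds is a class-K function of ω(ξ). -/
open Filter Finset NNReal

noncomputable section

/-- (Lemma: any feedback `h` satisfying the constraints of OCP-1 and the
cost-domination inequality w.r.t. the afcl `q` associated with the fs-CLF `V` is itself
an admissible finite-step feedback control law, with the explicit K-bounds given below). -/
theorem feedback_admissible {n m : ℕ}
    (X : Set (Fin n → ℝ)) (U : Set (Fin m → ℝ))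
    (g : (Fin n → ℝ) → (Fin m → ℝ) → (Fin n → ℝ))
    (hg : ContinuousOn (fun p : (Fin n → ℝ) × (Fin m → ℝ) => g p.1 p.2) (X ×ˢ U))
    (ω : (Fin n → ℝ) → ℝ≥0) (hω : Continuous ω) (hωzero : ∃ x, ω x = 0)
    (M : ℕ) (hM : 1 ≤ M)
    (V : (Fin n → ℝ) → ℝ≥0) (hV : Continuous V)
    (ulα olα : ℝ≥0 → ℝ≥0) (hulα : ClassKInf ulα) (holα : ClassKInf olα)
    (ulαinv : ℝ≥0 → ℝ≥0)
    (hinvl : Function.LeftInverse ulαinv ulα) (hinvr : Function.RightInverse ulαinv ulα)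
    (hsandwich : ∀ ξ, ulα (ω ξ) ≤ V ξ ∧ V ξ ≤ olα (ω ξ))
    (q : (Fin n → ℝ) → ℕ → Fin m → ℝ) (hq : IsAfcl ω X U g M q)
    (α : ℝ≥0 → ℝ≥0) (hα : ClassKInf α) (hαlt : ∀ s : ℝ≥0, 0 < s → α s < s)
    (hdecay : ∀ ξ ∈ X, V (iter g ξ (q ξ) M) ≤ α (V ξ))
    -- the class-K functions `κ_i` of the afcl `q`, with `κ_0 := id`
    (κ : ℕ → ℝ≥0 → ℝ≥0) (hκ0 : κ 0 = id) (hκK : ∀ i < M, ClassK (κ i))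
    (hκbound : ∀ i : ℕ, 1 ≤ i → i < M → ∀ ξ ∈ X, ω (iter g ξ (q ξ) i) ≤ κ i (ω ξ))
    -- the feedback `h` satisfying the constraints of OCP-1 …
    (h : (Fin n → ℝ) → ℕ → Fin m → ℝ)
    (hhU : ∀ ξ ∈ X, ∀ j < M, h ξ j ∈ U)
    (hhX : ∀ ξ ∈ X, ∀ j : ℕ, 1 ≤ j → j ≤ M → iter g ξ (h ξ) j ∈ X)
    (hhcontr : ∀ ξ ∈ X, V (iter g ξ (h ξ) M) ≤ α (V ξ))
    -- … and the cost-domination inequality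
    (hhcost : ∀ ξ ∈ X,
      ∑ i ∈ Finset.range M, V (iter g ξ (h ξ) i) ≤
        ∑ i ∈ Finset.range M, V (iter g ξ (q ξ) i)) :
    -- `h` is an admissible finite-step feedback control law,
    IsAfcl ω X U g M h ∧
    -- with the explicit bounds: for `j = 1,…,M-1`,
    (∀ ξ ∈ X, ∀ j : ℕ, 1 ≤ j → j < M →
      ω (iter g ξ (h ξ) j) ≤ ulαinv (∑ i ∈ Finset.range M, olα (κ i (ω ξ)))) ∧
    -- for `j = M`,
    (∀ ξ ∈ X, ω (iter g ξ (h ξ) M) ≤ ulαinv (α (olα (ω ξ)))) ∧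
    -- and each of these bounds is a class-K function of `ω(ξ)`.
    ClassK (fun r => ulαinv (∑ i ∈ Finset.range M, olα (κ i r))) ∧
    ClassK (fun r => ulαinv (α (olα r))) := by
  have hmono := hulα.1.2.1
  let e : ℝ≥0 ≃o ℝ≥0 := StrictMono.orderIsoOfRightInverse ulα hmono ulαinv hinvr
  have hic : Continuous ulαinv := e.symm.continuous
  have him : StrictMono ulαinv := e.symm.strictMono
  have hi0 : ulαinv 0 = 0 := by
    have h0 := hinvl 0
    rwa [hulα.1.2.2] at h0
  have key : ∀ x : Fin n → ℝ, ∀ c : ℝ≥0, V x ≤ c → ω x ≤ ulαinv c := by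
    intro x c hc
    have h1 := him.monotone ((hsandwich x).1.trans hc)
    rwa [hinvl] at h1
  have hB1 : ∀ ξ ∈ X, ∀ j : ℕ, 1 ≤ j → j < M →
      ω (iter g ξ (h ξ) j) ≤ ulαinv (∑ i ∈ Finset.range M, olα (κ i (ω ξ))) := by
    intro ξ hξ j _ hj
    apply key
    calc V (iter g ξ (h ξ) j) ≤ ∑ i ∈ Finset.range M, V (iter g ξ (h ξ) i) :=
          Finset.single_le_sum (f := fun i => V (iter g ξ (h ξ) i))
            (fun i _ => zero_le) (Finset.mem_range.2 hj)
      _ ≤ _ := hhcost ξ hξ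
      _ ≤ _ := by
        apply Finset.sum_le_sum
        intro i hi
        refine (hsandwich _).2.trans (holα.1.2.1.monotone ?_)
        rcases Nat.eq_zero_or_pos i with rfl | hpos
        · simp [hκ0, iter]
        · exact hκbound i hpos (Finset.mem_range.1 hi) ξ hξ
  have hB2 : ∀ ξ ∈ X, ω (iter g ξ (h ξ) M) ≤ ulαinv (α (olα (ω ξ))) := by
    intro ξ hξ
    exact key _ _ ((hhcontr ξ hξ).trans (hα.1.2.1.monotone (hsandwich ξ).2))
  have hK1 : ClassK (fun r => ulαinv (∑ i ∈ Finset.range M, olα (κ i r))) := by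
    refine ⟨?_, ?_, ?_⟩
    · refine hic.comp (continuous_finsetSum _ fun i hi => ?_)
      exact holα.1.1.comp (hκK i (Finset.mem_range.1 hi)).1
    · intro a b hab
      refine him (Finset.sum_lt_sum_of_nonempty ⟨0, Finset.mem_range.2 hM⟩ fun i hi => ?_)
      exact holα.1.2.1 ((hκK i (Finset.mem_range.1 hi)).2.1 hab)
    · have hs : ∑ i ∈ Finset.range M, olα (κ i 0) = 0 :=
        Finset.sum_eq_zero fun i hi => by
          rw [(hκK i (Finset.mem_range.1 hi)).2.2, holα.1.2.2]
      simp only [hs, hi0]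
  have hK2 : ClassK (fun r => ulαinv (α (olα r))) := by
    refine ⟨hic.comp (hα.1.1.comp holα.1.1), fun a b hab => him (hα.1.2.1 (holα.1.2.1 hab)), ?_⟩
    simp only [holα.1.2.2, hα.1.2.2, hi0]
  refine ⟨⟨hhU, hhX, ?_⟩, hB1, hB2, hK1, hK2⟩
  intro j hj1 hjM
  rcases hjM.lt_or_eq with hlt | rfl
  · exact ⟨_, hK1, fun ξ hξ => hB1 ξ hξ j hj1 hlt⟩
  · exact ⟨_, hK2, hB2⟩
end
end

section
/- Let ω be a measurement function and V a finite-step control Lyapunov function for time step M. For N ∈ ℕ*, let V_N(ξ) denote the optimal value of the horizon-N problem: V_N(ξ) = min over admissible control sequences u_N ∈ U^N (satisfying u_j ∈ U and g(x(j),u_j) ∈ X for j = 0,…,N−1) of Σ_{i=0}^{N−1} V(x(i,ξ,u_N)), and let the MPC closed loop be x⁺ = g(x, u₀*(x)) where u₀*(x) is the first element of an optimal sequence. Assume there exists a class-K∞ function σ such that V_N(ξ) ≤ σ(V(ξ)) for all ξ ∈ X and all N ∈ ℕ*. Then the MPC scheme is semiglobally practically asymptotically ω-stabilizing in A := ω⁻¹(0)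 with respect to the optimization horizon N: there exists a class-KL function β such that for each δ > 0 and Δ > δ there is N_{δ,Δ} ∈ ℕ* such that for all N ≥ N_{δ,Δ} and all ξ with ω(ξ) < Δ, the MPC closed-loop solutions satisfy ω(x_{MPC(N)}(t,ξ)) ≤ max{β(ω(ξ), t), δ} for all t ∈ ℕ. If moreover σ is linear, σ(r) = γr with γ > 1, then the MPC closed loop is asymptotically ω-stable in A for all N > 2 + ln(γ−1)/(ln γ − ln(γ−1)). -/
open Filter Finset NNReal

noncomputable section

/-- A control sequence `u` of length `N` is admissible from `ξ`: all applied inputs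
lie in `U` and the resulting states remain in `X`. -/
def Adm {n m : ℕ} (X : Set (Fin n → ℝ)) (U : Set (Fin m → ℝ))
    (g : (Fin n → ℝ) → (Fin m → ℝ) → (Fin n → ℝ)) (ξ : Fin n → ℝ) (N : ℕ)
    (u : ℕ → Fin m → ℝ) : Prop :=
  ∀ j < N, u j ∈ U ∧ iter g ξ u (j + 1) ∈ X

/-- The MPC cost functional `Σ_{i=0}^{N-1} V(x(i,ξ,u))`. -/
def cost {n m : ℕ} (V : (Fin n → ℝ) → ℝ≥0)
    (g : (Fin n → ℝ) → (Fin m → ℝ) → (Fin n → ℝ)) (N : ℕ) (ξ : Fin n → ℝ)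
    (u : ℕ → Fin m → ℝ) : ℝ≥0 :=
  ∑ i ∈ Finset.range N, V (iter g ξ u i)

/-- `uopt` is a selection of optimal control sequences for the horizon-`N`
optimal control problem with running cost `V`. -/
def IsOptSel {n m : ℕ} (X : Set (Fin n → ℝ)) (U : Set (Fin m → ℝ))
    (g : (Fin n → ℝ) → (Fin m → ℝ) → (Fin n → ℝ)) (V : (Fin n → ℝ) → ℝ≥0) (N : ℕ)
    (uopt : (Fin n → ℝ) → ℕ → Fin m → ℝ) : Prop :=
  ∀ ξ ∈ X, Adm X U g ξ N (uopt ξ) ∧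
    ∀ u : ℕ → Fin m → ℝ, Adm X U g ξ N u → cost V g N ξ (uopt ξ) ≤ cost V g N ξ u

/-- The MPC closed loop: at every time step apply the first element of the
(selected) optimal control sequence. -/
def mpcLoop {n m : ℕ} (g : (Fin n → ℝ) → (Fin m → ℝ) → (Fin n → ℝ))
    (uopt : (Fin n → ℝ) → ℕ → Fin m → ℝ) (ξ : Fin n → ℝ) : ℕ → Fin n → ℝ
  | 0 => ξ
  | t + 1 => g (mpcLoop g uopt ξ t) (uopt (mpcLoop g uopt ξ t) 0)

lemma iter_add_aux {n m : ℕ} (g : (Fin n → ℝ) → (Fin m → ℝ) → (Fin n → ℝ)) (ξ : Fin n → ℝ)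
    (u : ℕ → Fin m → ℝ) (a b : ℕ) :
    iter g ξ u (a + b) = iter g (iter g ξ u a) (fun i => u (a + i)) b := by
  induction b with
  | zero => rfl
  | succ b ih =>
    rw [← add_assoc]
    simp only [iter]
    rw [ih]

lemma iter_congr_aux {n m : ℕ} (g : (Fin n → ℝ) → (Fin m → ℝ) → (Fin n → ℝ)) (ξ : Fin n → ℝ)
    (u v : ℕ → Fin m → ℝ) (k : ℕ) (h : ∀ i < k, u i = v i) :
    iter g ξ u k = iter g ξ v k := by
  induction k with
  | zero => rfl
  | succ k ih =>
    simp only [iter]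
    rw [ih (fun i hi => h i (by omega)), h k (by omega)]

/-- The basic dynamic programming estimate. -/
lemma value_step {n m : ℕ}
    (X : Set (Fin n → ℝ)) (U : Set (Fin m → ℝ))
    (g : (Fin n → ℝ) → (Fin m → ℝ) → (Fin n → ℝ))
    (V : (Fin n → ℝ) → ℝ≥0)
    (uopt : ℕ → (Fin n → ℝ) → ℕ → Fin m → ℝ)
    (hopt : ∀ N : ℕ, 1 ≤ N → IsOptSel X U g V N (uopt N))
    (σ : ℝ≥0 → ℝ≥0)
    (hVN : ∀ N : ℕ, 1 ≤ N → ∀ ξ ∈ X, cost V g N ξ (uopt N ξ) ≤ σ (V ξ))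
    (N : ℕ) (ξ : Fin n → ℝ) (hξ : ξ ∈ X) (p : ℕ) (hp : p < N) :
    cost V g N (g ξ (uopt N ξ 0)) (uopt N (g ξ (uopt N ξ 0))) ≤
      (∑ i ∈ Finset.range p, V (iter g ξ (uopt N ξ) (i + 1))) +
        σ (V (iter g ξ (uopt N ξ) (p + 1))) := by
  set u := uopt N ξ with hu
  have hadm : Adm X U g ξ N u := (hopt N (by omega) ξ hξ).1
  set y := g ξ (u 0) with hy
  have hyX : y ∈ X := (hadm 0 (by omega)).2
  set z := iter g ξ u (p + 1) with hz
  have hzX : z ∈ X := (hadm p hp).2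
  set w := uopt (N - p) z with hw
  have hwadm : Adm X U g z (N - p) w := (hopt (N - p) (by omega) z hzX).1
  let v : ℕ → Fin m → ℝ := fun i => if i < p then u (i + 1) else w (i - p)
  have h1 : ∀ i ≤ p, iter g y v i = iter g ξ u (i + 1) := by
    intro i hi
    rw [add_comm i 1, iter_add_aux]
    apply iter_congr_aux
    intro k hk
    simp only [v]
    rw [if_pos (by omega), add_comm]
  have h2 : ∀ i, iter g y v (p + i) = iter g z w i := by
    intro i
    rw [iter_add_aux, h1 p le_rfl]
    apply iter_congr_aux
    intro k hk
    simp [v]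
  have hv : Adm X U g y N v := by
    intro j hj
    by_cases hjp : j < p
    · refine ⟨?_, ?_⟩
      · simp only [v, if_pos hjp]
        exact (hadm (j + 1) (by omega)).1
      · rw [h1 (j + 1) (by omega)]
        exact (hadm (j + 1) (by omega)).2
    · obtain ⟨i, rfl⟩ := Nat.exists_eq_add_of_le (not_lt.mp hjp)
      refine ⟨?_, ?_⟩
      · have : v (p + i) = w i := by simp [v]
        rw [this]
        exact (hwadm i (by omega)).1
      · rw [add_assoc, h2]
        exact (hwadm i (by omega)).2
  refine ((hopt N (by omega) y hyX).2 v hv).trans ?_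
  have hN : N = p + (N - p) := by omega
  have : cost V g N y v = (∑ i ∈ Finset.range p, V (iter g ξ u (i + 1))) +
      cost V g (N - p) z w := by
    unfold cost
    conv_lhs => rw [hN]
    rw [Finset.sum_range_add]
    congr 1
    · apply Finset.sum_congr rfl
      intro i hi
      rw [h1 i (Finset.mem_range.mp hi).le]
    · apply Finset.sum_congr rfl
      intro i _
      rw [h2]
  rw [this]
  gcongr
  exact hVN (N - p) (by omega) z hzX

lemma mpc_mem {n m : ℕ}
    (X : Set (Fin n → ℝ)) (U : Set (Fin m → ℝ))
    (g : (Fin n → ℝ) → (Fin m → ℝ) → (Fin n → ℝ))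
    (V : (Fin n → ℝ) → ℝ≥0)
    (N : ℕ) (hN : 1 ≤ N) (u : (Fin n → ℝ) → ℕ → Fin m → ℝ)
    (hopt : IsOptSel X U g V N u)
    (ξ : Fin n → ℝ) (hξ : ξ ∈ X) (t : ℕ) : mpcLoop g u ξ t ∈ X := by
  induction t with
  | zero => exact hξ
  | succ t ih => exact ((hopt _ ih).1 0 (by omega)).2

/-- A class-K∞ function has an order isomorphism underlying it. -/
lemma ClassKInf.exists_orderIso {κ : ℝ≥0 → ℝ≥0} (h : ClassKInf κ) :
    ∃ e : ℝ≥0 ≃o ℝ≥0, ∀ x, e x = κ x := by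
  obtain ⟨⟨hc, hm, h0⟩, ht⟩ := h
  have hs : Function.Surjective κ := by
    intro y
    obtain ⟨b, hb⟩ := (ht.eventually (eventually_ge_atTop y)).exists
    have := intermediate_value_Icc (zero_le (a := b)) hc.continuousOn
    obtain ⟨x, -, hx⟩ := this (show y ∈ Set.Icc (κ 0) (κ b) from ⟨by simp [h0], hb⟩)
    exact ⟨x, hx⟩
  exact ⟨hm.orderIsoOfSurjective κ hs, fun x => rfl⟩

lemma tendsto_inv_succ_aux : Tendsto (fun s : ℝ≥0 => (s + 1)⁻¹) atTop (nhds 0) := by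
  have h : Tendsto (fun s : ℝ≥0 => ((s : ℝ) + 1)) atTop atTop :=
    tendsto_atTop_add_const_right _ _ (NNReal.tendsto_coe_atTop.mpr tendsto_id)
  rw [← NNReal.tendsto_coe]
  simpa [Function.comp_def] using (tendsto_inv_atTop_zero (𝕜 := ℝ)).comp h

lemma classKL_of {A B d : ℝ≥0 → ℝ≥0} (hA : ClassK A) (hB : ClassK B)
    (hdc : Continuous d) (hda : Antitone d) (hdp : ∀ s, 0 < d s)
    (hdt : Tendsto d atTop (nhds 0)) : ClassKL (fun r s => A (B r * d s)) := by
  obtain ⟨hAc, hAm, hA0⟩ := hA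
  obtain ⟨hBc, hBm, hB0⟩ := hB
  refine ⟨by fun_prop, fun s => ⟨by fun_prop, ?_, by simp [hA0, hB0]⟩, fun r => ⟨?_, ?_⟩⟩
  · intro a b hab
    exact hAm (mul_lt_mul_of_pos_right (hBm hab) (hdp s))
  · intro a b hab
    exact hAm.monotone (mul_le_mul_right (hda hab) _)
  · have h1 : Tendsto (fun s => B r * d s) atTop (nhds 0) := by
      simpa using hdt.const_mul (B r)
    have h2 := (hAc.tendsto 0).comp h1
    rw [hA0] at h2
    exact h2

lemma classK_orderIso (e : ℝ≥0 ≃o ℝ≥0) : ClassK e :=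
  ⟨e.continuous, e.strictMono, by simpa using e.map_bot⟩

/-- Abstract practical decay of a sequence. -/
lemma seq_decay (τ : ℝ≥0 ≃o ℝ≥0) (W v : ℕ → ℝ≥0) (ε L : ℝ≥0)
    (hη : τ (2 * ε) + ε ≤ L) (h0 : W 0 ≤ L)
    (hvW : ∀ t, v t ≤ W t) (hWv : ∀ t, W t ≤ τ (v t))
    (hstep : ∀ t, W t ≤ L → W (t + 1) + v t ≤ W t + ε) (t : ℕ) :
    W t ≤ max (τ (2 * W 0 / ((t : ℝ≥0) + 1))) (τ (2 * ε) + ε) := by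
  have hτv : ∀ t, τ.symm (W t) ≤ v t := fun t => by
    rw [OrderIso.symm_apply_le]; exact hWv t
  have key : W t ≤ τ (2 * ε) + ε ∨ (W t ≤ L ∧ (t : ℝ≥0) * τ.symm (W t) + 2 * W t ≤ 2 * W 0) := by
    induction t with
    | zero => right; exact ⟨h0, by simp⟩
    | succ t ih =>
      have hL : W t ≤ L := by
        rcases ih with h | h
        · exact h.trans hη
        · exact h.1
      have hs := hstep t hL
      by_cases hW : W t ≤ τ (2 * ε) + ε
      · left
        by_cases hv : ε ≤ v t
        · refine le_trans ?_ hW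
          have : W (t + 1) + ε ≤ W t + ε := le_trans (by gcongr) hs
          exact le_of_add_le_add_right this
        · have h1 : W t ≤ τ (2 * ε) := (hWv t).trans (τ.monotone ((not_le.mp hv).le.trans
            (by rw [two_mul]; exact le_self_add)))
          exact (le_trans le_self_add hs).trans (by gcongr)
      · right
        have hQ := (ih.resolve_left hW).2
        have hv : 2 * ε ≤ v t := by
          by_contra hc
          apply hW
          exact ((hWv t).trans (τ.monotone (not_le.mp hc).le)).trans le_self_add
        have hW' : W (t + 1) ≤ W t := by
          have : W (t + 1) + ε ≤ W t + ε :=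
            le_trans (by gcongr; exact le_trans (by rw [two_mul]; exact le_self_add) hv) hs
          exact le_of_add_le_add_right this
        refine ⟨hW'.trans hL, ?_⟩
        have h3 : τ.symm (W (t + 1)) ≤ τ.symm (W t) := τ.symm.monotone hW'
        have h4 := hτv t
        have h5 : (t : ℝ≥0) * τ.symm (W (t + 1)) ≤ t * τ.symm (W t) := by gcongr
        rw [← NNReal.coe_le_coe] at *
        push_cast at *
        linarith
  rcases key with h | ⟨-, h⟩
  · exact h.trans (le_max_right _ _)
  · refine le_trans ?_ (le_max_left _ _)
    rw [← OrderIso.symm_apply_le, le_div_iff₀ (by positivity)]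
    have h1 := hτv t
    have h2 := hvW t
    rw [← NNReal.coe_le_coe] at *
    push_cast at *
    have := (W t).coe_nonneg
    linarith

lemma linear_gap (γ : ℝ) (hγ : 1 < γ) (k : ℕ)
    (h : ((k + 1 : ℕ) : ℝ) > 2 + Real.log (γ - 1) / (Real.log γ - Real.log (γ - 1))) :
    ((γ - 1) / γ) ^ k < 1 / γ := by
  have h1 : 0 < γ - 1 := by linarith
  have hl : 0 < Real.log γ - Real.log (γ - 1) := by
    have := Real.log_lt_log h1 (show γ - 1 < γ by linarith)
    linarith
  have h2 : Real.log (γ - 1) / (Real.log γ - Real.log (γ - 1)) < k - 1 := by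
    push_cast at h; linarith
  rw [div_lt_iff₀ hl] at h2
  rw [← Real.log_lt_log_iff (by positivity) (by positivity), Real.log_pow,
    Real.log_div h1.ne' (by positivity), Real.log_div one_ne_zero (by positivity), Real.log_one]
  linarith

lemma linear_step (γ : ℝ) (hγ : 1 < γ) (k : ℕ) (hk : ((γ - 1) / γ) ^ k < 1 / γ)
    (l : ℕ → ℝ) (ν W : ℝ) (hW : W = l 0 + ∑ i ∈ Finset.range k, l (i + 1)) (hWl : W ≤ γ * l 0)
    (hν : ∀ p < k, ν ≤ (∑ i ∈ Finset.range p, l (i + 1)) + γ * l (p + 1)) :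
    ν ≤ ((γ - 1) / γ) / (1 - ((γ - 1) / γ) ^ k) * W := by
  have hγ0 : 0 < γ := by linarith
  set ρ := (γ - 1) / γ with hρ
  have hργ : γ * ρ = γ - 1 := by rw [hρ]; field_simp
  have hρ0 : 0 ≤ ρ := by rw [hρ]; apply div_nonneg <;> linarith
  have hD : ∀ p ≤ k, ν - ∑ i ∈ Finset.range p, l (i + 1) ≤ ρ ^ p * ν := by
    intro p
    induction p with
    | zero => intro _; simp
    | succ p ih =>
      intro hp
      have h1 := ih (by omega)
      have h2 := hν p (by omega)
      rw [Finset.sum_range_succ]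
      set T := ∑ i ∈ Finset.range p, l (i + 1)
      have h3 : ν - (T + l (p + 1)) ≤ ρ * (ν - T) := by
        have : γ * (ν - (T + l (p + 1))) ≤ γ * (ρ * (ν - T)) := by
          rw [← mul_assoc, hργ]; nlinarith
        exact le_of_mul_le_mul_left this hγ0
      calc _ ≤ ρ * (ν - T) := h3
        _ ≤ ρ * (ρ ^ p * ν) := by gcongr
        _ = _ := by ring
  have h1 := hD k le_rfl
  have h2 : 1 / γ < 1 := by rw [div_lt_one hγ0]; exact hγ
  have h3 : 0 < 1 - ρ ^ k := by linarith
  have h4 : W - l 0 ≤ ρ * W := by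
    have : γ * (W - l 0) ≤ γ * (ρ * W) := by rw [← mul_assoc, hργ]; nlinarith
    exact le_of_mul_le_mul_left this hγ0
  rw [div_mul_eq_mul_div, le_div_iff₀ h3]
  nlinarith

/-- (Proposition: if the optimal value functions `V_N` are uniformly bounded
by `σ(V)` for a class-K∞ function `σ`, the classic MPC scheme is semiglobally practically
asymptotically ω-stabilizing; if `σ` is linear, `σ(r) = γr`, the MPC closed loop is
asymptotically ω-stable for all `N > 2 + ln(γ-1)/(ln γ - ln(γ-1))`). -/
theorem mpc_value_bound_stabilizes {n m : ℕ}
    (X : Set (Fin n → ℝ)) (U : Set (Fin m → ℝ))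
    (g : (Fin n → ℝ) → (Fin m → ℝ) → (Fin n → ℝ))
    (hg : ContinuousOn (fun p : (Fin n → ℝ) × (Fin m → ℝ) => g p.1 p.2) (X ×ˢ U))
    (ω : (Fin n → ℝ) → ℝ≥0) (hω : Continuous ω) (hωzero : ∃ x, ω x = 0)
    (M : ℕ) (hM : 1 ≤ M)
    (V : (Fin n → ℝ) → ℝ≥0) (hV : Continuous V)
    (ulα olα : ℝ≥0 → ℝ≥0) (hulα : ClassKInf ulα) (holα : ClassKInf olα)
    (hsandwich : ∀ ξ, ulα (ω ξ) ≤ V ξ ∧ V ξ ≤ olα (ω ξ))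
    (q : (Fin n → ℝ) → ℕ → Fin m → ℝ) (hq : IsAfcl ω X U g M q)
    (α : ℝ≥0 → ℝ≥0) (hα : ClassKInf α) (hαlt : ∀ s : ℝ≥0, 0 < s → α s < s)
    (hdecay : ∀ ξ ∈ X, V (iter g ξ (q ξ) M) ≤ α (V ξ))
    -- a selection of optimal control sequences for every horizon `N ∈ ℕ*`
    (uopt : ℕ → (Fin n → ℝ) → ℕ → Fin m → ℝ)
    (hopt : ∀ N : ℕ, 1 ≤ N → IsOptSel X U g V N (uopt N))
    -- the value function bound `V_N(ξ) ≤ σ(V(ξ))`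
    (σ : ℝ≥0 → ℝ≥0) (hσ : ClassKInf σ)
    (hVN : ∀ N : ℕ, 1 ≤ N → ∀ ξ ∈ X, cost V g N ξ (uopt N ξ) ≤ σ (V ξ)) :
    -- semiglobal practical asymptotic ω-stabilization w.r.t. the horizon `N`
    (∃ β : ℝ≥0 → ℝ≥0 → ℝ≥0, ClassKL β ∧
      ∀ δ : ℝ≥0, 0 < δ → ∀ Δ : ℝ≥0, δ < Δ → ∃ N₀ : ℕ, 1 ≤ N₀ ∧
        ∀ N : ℕ, N₀ ≤ N → ∀ ξ ∈ X, ω ξ < Δ →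
          ∀ t : ℕ, ω (mpcLoop g (uopt N) ξ t) ≤ max (β (ω ξ) (t : ℝ≥0)) δ) ∧
    -- and, if `σ` is linear, asymptotic ω-stability for every
    -- `N > 2 + ln(γ-1)/(ln γ - ln(γ-1))`
    (∀ γ : ℝ≥0, 1 < γ → (∀ r : ℝ≥0, σ r = γ * r) →
      ∀ N : ℕ, 1 ≤ N →
        (N : ℝ) > 2 + Real.log ((γ : ℝ) - 1) / (Real.log (γ : ℝ) - Real.log ((γ : ℝ) - 1)) →
        ∃ β : ℝ≥0 → ℝ≥0 → ℝ≥0, ClassKL β ∧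
          ∀ ξ ∈ X, ∀ t : ℕ, ω (mpcLoop g (uopt N) ξ t) ≤ β (ω ξ) (t : ℝ≥0)) := by
  obtain ⟨τ, hτ⟩ := hσ.exists_orderIso
  obtain ⟨a, ha⟩ := hulα.exists_orderIso
  have hσK : ClassK σ := hσ.1
  have hωV : ∀ x, ω x ≤ a.symm (V x) := fun x => by
    rw [OrderIso.le_symm_apply, ha]; exact (hsandwich x).1
  have hcost : ∀ N ξ, V ξ ≤ cost V g (N + 1) ξ (uopt (N + 1) ξ) := by
    intro N ξ
    unfold cost
    rw [Finset.sum_range_succ']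
    exact le_add_self
  refine ⟨?_, ?_⟩
  · refine ⟨fun r s => a.symm (σ ((2 * σ (olα r)) * (s + 1)⁻¹)), ?_, ?_⟩
    · have hA : ClassK (fun x => a.symm (σ x)) :=
        ⟨a.symm.continuous.comp hσK.1, a.symm.strictMono.comp hσK.2.1, by
          simp only [hσK.2.2]; exact (classK_orderIso a.symm).2.2⟩
      have hB : ClassK (fun r => 2 * σ (olα r)) := by
        refine ⟨?_, ?_, ?_⟩
        · exact continuous_const.mul (hσK.1.comp holα.1.1)
        · intro x y hxy
          have h2 : (0 : ℝ≥0) < 2 := two_pos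
          have h3 : σ (olα x) < σ (olα y) := hσK.2.1 (holα.1.2.1 hxy)
          exact mul_lt_mul_of_pos_left h3 h2
        · simp [holα.1.2.2, hσK.2.2]
      refine classKL_of (d := fun s => (s + 1)⁻¹) hA hB ?_ ?_ ?_ ?_
      · exact Continuous.inv₀ (by fun_prop) (fun s => by positivity)
      · intro x y hxy
        dsimp only
        gcongr
      · intro s; positivity
      · exact tendsto_inv_succ_aux
    · intro δ hδ Δ hΔ
      set L := σ (olα Δ) with hL
      have hΔ0 : 0 < Δ := hδ.trans hΔ
      have hL0 : 0 < L := by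
        have h1 := holα.1.2.1 hΔ0
        rw [holα.1.2.2] at h1
        have h2 := hσK.2.1 h1
        rwa [hσK.2.2] at h2
      have hu0 : 0 < ulα δ := by
        have h1 := hulα.1.2.1 hδ
        rwa [hulα.1.2.2] at h1
      obtain ⟨ε, hε0, hε⟩ : ∃ ε : ℝ≥0, 0 < ε ∧ τ (2 * ε) + ε ≤ min L (ulα δ) := by
        have hc : Continuous (fun e : ℝ≥0 => τ (2 * e) + e) :=
          (τ.continuous.comp (by fun_prop)).add continuous_id
        have h0 : (fun e : ℝ≥0 => τ (2 * e) + e) 0 = 0 := by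
          simp [hτ, hσK.2.2]
        have h1 : Tendsto (fun e : ℝ≥0 => τ (2 * e) + e) (nhds 0) (nhds 0) := by
          have h9 := hc.tendsto 0
          have h8 : τ (2 * 0) + 0 = 0 := h0
          rwa [h8] at h9
        have h2 := h1.eventually (eventually_lt_nhds (lt_min hL0 hu0))
        have h3 : ∀ᶠ e in nhdsWithin (0 : ℝ≥0) (Set.Ioi 0), τ (2 * e) + e < min L (ulα δ) :=
          h2.filter_mono nhdsWithin_le_nhds
        obtain ⟨e, he1, he2⟩ := (h3.and self_mem_nhdsWithin).exists
        exact ⟨e, he2, he1.le⟩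
      have hc0 : 0 < τ.symm ε := by
        have := τ.symm.strictMono hε0
        rwa [(classK_orderIso τ.symm).2.2] at this
      obtain ⟨K, hK⟩ := exists_nat_ge (L / τ.symm ε)
      refine ⟨K + 2, by omega, ?_⟩
      intro N hN ξ hξ hωξ t
      obtain ⟨k, rfl⟩ : ∃ k, N = k + 1 := ⟨N - 1, by omega⟩
      have hk0 : 0 < (k : ℝ≥0) := by exact_mod_cast (show 0 < k by omega)
      have hLk : L ≤ k * τ.symm ε := by
        rw [← div_le_iff₀ hc0]
        exact hK.trans (by exact_mod_cast (show K ≤ k by omega))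
      have hX := mpc_mem X U g V (k + 1) (by omega) (uopt (k + 1)) (hopt _ (by omega)) ξ hξ
      set x := mpcLoop g (uopt (k + 1)) ξ with hx
      have hx0 : x 0 = ξ := rfl
      let W : ℕ → ℝ≥0 := fun t => cost V g (k + 1) (x t) (uopt (k + 1) (x t))
      have hW0 : W 0 ≤ σ (olα (ω ξ)) :=
        (hVN _ (by omega) _ (hX 0)).trans (hσK.2.1.monotone (hsandwich ξ).2)
      have hdec := seq_decay τ W (fun t => V (x t)) ε L (hε.trans (min_le_left _ _))
        (hW0.trans (hσK.2.1.monotone (holα.1.2.1.monotone hωξ.le)))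
        (fun t => hcost k (x t)) (fun t => by rw [hτ]; exact hVN _ (by omega) _ (hX t))
        (by
          intro t ht
          have hWt : W t = (∑ i ∈ Finset.range k, V (iter g (x t) (uopt (k + 1) (x t)) (i + 1)))
              + V (x t) := by
            simp only [W, cost]
            rw [Finset.sum_range_succ']
            rfl
          obtain ⟨p, hp, hpV⟩ : ∃ p < k,
              V (iter g (x t) (uopt (k + 1) (x t)) (p + 1)) ≤ τ.symm ε := by
            by_contra hcon
            push Not at hcon
            have hlt : ∑ i ∈ Finset.range k, τ.symm ε <
                ∑ i ∈ Finset.range k, V (iter g (x t) (uopt (k + 1) (x t)) (i + 1)) := by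
              apply Finset.sum_lt_sum_of_nonempty
              · exact ⟨0, Finset.mem_range.mpr (by omega)⟩
              · intro i hi; exact hcon i (Finset.mem_range.mp hi)
            rw [Finset.sum_const, Finset.card_range, nsmul_eq_mul] at hlt
            have h1 : _ ≤ W t := hWt ▸ le_self_add
            exact absurd ((hLk.trans_lt hlt).trans_le (h1.trans ht)) (lt_irrefl _)
          have hs := value_step X U g V uopt hopt σ hVN (k + 1) (x t) (hX t) p (by omega)
          have hs' : W (t + 1) ≤ _ := hs
          have h1 : σ (V (iter g (x t) (uopt (k + 1) (x t)) (p + 1))) ≤ ε := by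
            rw [← hτ, ← OrderIso.le_symm_apply]; exact hpV
          have h2 : ∑ i ∈ Finset.range p, V (iter g (x t) (uopt (k + 1) (x t)) (i + 1)) ≤
              ∑ i ∈ Finset.range k, V (iter g (x t) (uopt (k + 1) (x t)) (i + 1)) :=
            Finset.sum_le_sum_of_subset (Finset.range_mono hp.le)
          rw [hWt]
          have h3 := hs'.trans (add_le_add h2 h1)
          calc W (t + 1) + V (x t) ≤ (∑ i ∈ Finset.range k, V (iter g (x t) (uopt (k + 1) (x t)) (i + 1)) + ε)
                + V (x t) := by gcongr
            _ = _ := by ring) t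
      refine (hωV (x t)).trans ?_
      have h5 : V (x t) ≤ max (σ (2 * σ (olα (ω ξ)) * ((t : ℝ≥0) + 1)⁻¹)) (ulα δ) := by
        refine (hcost k (x t)).trans (hdec.trans (max_le_max ?_ (hε.trans (min_le_right _ _))))
        rw [hτ, div_eq_mul_inv]
        apply hσK.2.1.monotone
        gcongr
      refine (a.symm.monotone h5).trans ?_
      rw [a.symm.monotone.map_max, ← ha δ, OrderIso.symm_apply_apply]
  · intro γ hγ hσγ N hN1 hN
    obtain ⟨k, rfl⟩ : ∃ k, N = k + 1 := ⟨N - 1, by omega⟩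
    have hγ' : (1 : ℝ) < γ := by exact_mod_cast hγ
    have hgap := linear_gap γ hγ' k hN
    set ρ : ℝ := ((γ : ℝ) - 1) / γ with hρ
    have hρ0 : 0 < ρ := div_pos (by linarith) (by linarith)
    have hρ1 : ρ = 1 - 1 / γ := by rw [hρ]; field_simp
    have h3 : 0 < 1 - ρ ^ k := by linarith
    have hθ0 : 0 < ρ / (1 - ρ ^ k) := div_pos hρ0 h3
    have hθ1 : ρ / (1 - ρ ^ k) < 1 := by rw [div_lt_one h3]; linarith
    obtain ⟨θ, hθ⟩ : ∃ θ : ℝ≥0, (θ : ℝ) = ρ / (1 - ρ ^ k) := ⟨⟨_, hθ0.le⟩, rfl⟩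
    have hθpos : 0 < θ := by rw [← NNReal.coe_pos, hθ]; exact hθ0
    have hθlt : θ < 1 := by rw [← NNReal.coe_lt_coe, hθ]; exact hθ1
    refine ⟨fun r s => a.symm (γ * olα r * θ ^ (s : ℝ)), ?_, ?_⟩
    · refine classKL_of (d := fun s : ℝ≥0 => θ ^ (s : ℝ)) (B := fun r => γ * olα r)
        (classK_orderIso a.symm) ⟨?_, ?_, ?_⟩ ?_ ?_ ?_ ?_
      · exact continuous_const.mul holα.1.1
      · intro x y hxy
        exact mul_lt_mul_of_pos_left (holα.1.2.1 hxy) (zero_lt_one.trans hγ)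
      · simp [holα.1.2.2]
      · rw [continuous_iff_continuousAt]
        intro s
        exact (NNReal.continuousAt_rpow (x := θ) (y := (s : ℝ)) (Or.inl hθpos.ne')).comp
          (f := fun s : ℝ≥0 => (θ, (s : ℝ))) (by fun_prop)
      · intro x y hxy
        exact NNReal.rpow_le_rpow_of_exponent_ge hθpos hθlt.le (by exact_mod_cast hxy)
      · intro s; exact NNReal.rpow_pos hθpos
      · rw [← NNReal.tendsto_coe]
        have h1 := tendsto_rpow_atTop_of_base_lt_one (θ : ℝ) (by
          have := θ.coe_nonneg; linarith) (by exact_mod_cast hθlt)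
        have h2 : Tendsto (fun s : ℝ≥0 => (s : ℝ)) atTop atTop :=
          NNReal.tendsto_coe_atTop.mpr tendsto_id
        simpa [Function.comp_def] using h1.comp h2
    · intro ξ hξ t
      have hX := mpc_mem X U g V (k + 1) (by omega) (uopt (k + 1)) (hopt _ (by omega)) ξ hξ
      set x := mpcLoop g (uopt (k + 1)) ξ with hx
      let W : ℕ → ℝ≥0 := fun t => cost V g (k + 1) (x t) (uopt (k + 1) (x t))
      have hstep : ∀ t, W (t + 1) ≤ θ * W t := by
        intro t
        have hWt : W t = V (x t) +
            (∑ i ∈ Finset.range k, V (iter g (x t) (uopt (k + 1) (x t)) (i + 1))) := by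
          simp only [W, cost]
          rw [Finset.sum_range_succ', add_comm]
          rfl
        have hb : W t ≤ γ * V (x t) := by
          rw [← hσγ]; exact hVN _ (by omega) _ (hX t)
        rw [← NNReal.coe_le_coe]
        push_cast
        rw [hθ]
        apply linear_step γ hγ' k hgap
          (fun i => (V (iter g (x t) (uopt (k + 1) (x t)) i) : ℝ))
        · rw [hWt]; push_cast; rfl
        · exact_mod_cast hb
        · intro p hp
          have hs := value_step X U g V uopt hopt σ hVN (k + 1) (x t) (hX t) p (by omega)
          rw [hσγ] at hs
          exact_mod_cast hs
      have hall : W t ≤ γ * olα (ω ξ) * θ ^ t := by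
        induction t with
        | zero =>
          simp only [pow_zero, mul_one]
          refine (hVN _ (by omega) _ (hX 0)).trans ?_
          rw [hσγ]
          gcongr
          exact (hsandwich ξ).2
        | succ t ih =>
          refine (hstep t).trans ?_
          calc θ * W t ≤ θ * (γ * olα (ω ξ) * θ ^ t) := by gcongr
            _ = _ := by ring
      refine (hωV (x t)).trans (a.symm.monotone ?_)
      refine (hcost k (x t)).trans (hall.trans (le_of_eq ?_))
      simp
end
end

section
/- Let ω be a measurement function and V a finite-step control Lyapunov function for time step M with afcl q, with linear decay V(x(M,ξ,q(ξ))) ≤ c·V(ξ) for all ξ ∈ X, c ∈ [0,1), and with transient bound V(g^i(ξ,q(ξ))) ≤ κ̂(V(ξ)) for i = 1,…,M−1, where κ̂ satisfies κ̂(r) ≤ q₀·max{r^a, r^b} for constants a, b, q₀ > 0. Then the classic MPC scheme (minimizing Σ_{i=0}^{N−1} V(x(i,ξ,u_N)) over admissible sequences and applying the first element of an optimal sequence at each time step) is semiglobally practically asymptotically ω-stabilizing in A := ω⁻¹(0) with respect to the optimization horizon N. -/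
open Filter Finset NNReal

noncomputable section

section Helpers

variable {n m : ℕ} {X : Set (Fin n → ℝ)} {U : Set (Fin m → ℝ)}
  {g : (Fin n → ℝ) → (Fin m → ℝ) → (Fin n → ℝ)} {V : (Fin n → ℝ) → ℝ≥0}

theorem iter_shift (ξ : Fin n → ℝ) (u : ℕ → Fin m → ℝ) (k j : ℕ) :
    iter g ξ u (k + j) = iter g (iter g ξ u k) (fun i => u (k + i)) j := by
  induction j with
  | zero => rfl
  | succ j ih => rw [← Nat.add_assoc]; simp only [iter]; rw [ih]

theorem iter_congr (ξ : Fin n → ℝ) (u v : ℕ → Fin m → ℝ) (k : ℕ)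
    (h : ∀ i < k, u i = v i) : iter g ξ u k = iter g ξ v k := by
  induction k with
  | zero => rfl
  | succ k ih =>
    simp only [iter]
    rw [ih (fun i hi => h i (by omega)), h k (by omega)]

theorem cost_add (k l : ℕ) (ξ : Fin n → ℝ) (u : ℕ → Fin m → ℝ) :
    cost V g (k + l) ξ u
      = cost V g k ξ u + cost V g l (iter g ξ u k) (fun i => u (k + i)) := by
  unfold cost
  rw [Finset.sum_range_add]
  simp only [iter_shift]

theorem cost_congr (k : ℕ) (ξ : Fin n → ℝ) (u v : ℕ → Fin m → ℝ)
    (h : ∀ i < k, u i = v i) : cost V g k ξ u = cost V g k ξ v := by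
  unfold cost
  refine Finset.sum_congr rfl fun i hi => ?_
  rw [iter_congr ξ u v i]
  intro j hj
  exact h j (by have := Finset.mem_range.1 hi; omega)

theorem cost_one (ξ : Fin n → ℝ) (u : ℕ → Fin m → ℝ) : cost V g 1 ξ u = V ξ := by
  simp [cost, iter]

/-- Concatenation of control sequences. -/
def cat (k : ℕ) (u v : ℕ → Fin m → ℝ) : ℕ → Fin m → ℝ :=
  fun i => if i < k then u i else v (i - k)

theorem cat_lt (k : ℕ) (u v : ℕ → Fin m → ℝ) (i : ℕ) (hi : i < k) : cat k u v i = u i := by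
  simp [cat, hi]

theorem cat_add (k : ℕ) (u v : ℕ → Fin m → ℝ) : (fun i => cat k u v (k + i)) = v := by
  funext i
  simp [cat]

theorem iter_cat (k : ℕ) (ξ : Fin n → ℝ) (u v : ℕ → Fin m → ℝ) (j : ℕ) :
    iter g ξ (cat k u v) (k + j) = iter g (iter g ξ u k) v j := by
  rw [iter_shift, cat_add, iter_congr ξ _ u k (cat_lt k u v)]

theorem cost_cat (k l : ℕ) (ξ : Fin n → ℝ) (u v : ℕ → Fin m → ℝ) :
    cost V g (k + l) ξ (cat k u v) = cost V g k ξ u + cost V g l (iter g ξ u k) v := by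
  rw [cost_add, cat_add, iter_congr ξ _ u k (cat_lt k u v), cost_congr k ξ _ u (cat_lt k u v)]

theorem adm_cat (k l : ℕ) (ξ : Fin n → ℝ) (u v : ℕ → Fin m → ℝ)
    (hu : Adm X U g ξ k u) (hv : Adm X U g (iter g ξ u k) l v) :
    Adm X U g ξ (k + l) (cat k u v) := by
  intro j hj
  by_cases h : j < k
  · rw [cat_lt k u v j h, iter_congr ξ _ u (j + 1) (fun i hi => cat_lt k u v i (by omega))]
    exact hu j h
  · obtain ⟨i, rfl⟩ : ∃ i, j = k + i := ⟨j - k, by omega⟩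
    have h1 : cat k u v (k + i) = v i := congrFun (cat_add k u v) i
    rw [h1, Nat.add_assoc, iter_cat]
    exact hv i (by omega)

theorem adm_shift (k l : ℕ) (ξ : Fin n → ℝ) (u : ℕ → Fin m → ℝ)
    (hu : Adm X U g ξ (k + l) u) : Adm X U g (iter g ξ u k) l (fun i => u (k + i)) := by
  intro j hj
  rw [← iter_shift, ← Nat.add_assoc]
  exact hu (k + j) (by omega)

theorem adm_mono {k l : ℕ} (h : k ≤ l) (ξ : Fin n → ℝ) (u : ℕ → Fin m → ℝ)
    (hu : Adm X U g ξ l u) : Adm X U g ξ k u := fun j hj => hu j (by omega)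

theorem adm_mem {k : ℕ} (ξ : Fin n → ℝ) (hξ : ξ ∈ X) (u : ℕ → Fin m → ℝ)
    (hu : Adm X U g ξ k u) (j : ℕ) (hj : j ≤ k) : iter g ξ u j ∈ X := by
  cases j with
  | zero => exact hξ
  | succ j => exact (hu j (by omega)).2

/-- Uniform-in-`N` upper bound on the optimal cost. -/
theorem exists_cheap (ω : (Fin n → ℝ) → ℝ≥0) (M : ℕ) (hM : 1 ≤ M)
    (q : (Fin n → ℝ) → ℕ → Fin m → ℝ) (hq : IsAfcl ω X U g M q) (c : ℝ≥0)
    (hdecay : ∀ ξ ∈ X, V (iter g ξ (q ξ) M) ≤ c * V ξ)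
    (κ ρ : ℝ≥0 → ℝ≥0) (hρ : Monotone ρ)
    (htr : ∀ ξ ∈ X, ∀ i : ℕ, 1 ≤ i → i < M → V (iter g ξ (q ξ) i) ≤ κ (V ξ))
    (hκρ : ∀ r, r + M * κ r + ρ (c * r) ≤ ρ r) (N : ℕ) :
    ∀ ξ ∈ X, ∃ u, Adm X U g ξ N u ∧ cost V g N ξ u ≤ ρ (V ξ) := by
  have hadm : ∀ ξ ∈ X, Adm X U g ξ M (q ξ) := fun ξ hξ j hj =>
    ⟨hq.1 ξ hξ j hj, hq.2.1 ξ hξ (j + 1) (by omega) (by omega)⟩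
  have hcost : ∀ ξ ∈ X, cost V g M ξ (q ξ) ≤ V ξ + M * κ (V ξ) := by
    intro ξ hξ
    obtain ⟨M', rfl⟩ : ∃ M', M = M' + 1 := ⟨M - 1, by omega⟩
    unfold cost
    rw [Finset.sum_range_succ', add_comm]
    refine add_le_add le_rfl ?_
    calc ∑ k ∈ Finset.range M', V (iter g ξ (q ξ) (k + 1))
        ≤ ∑ k ∈ Finset.range M', κ (V ξ) := Finset.sum_le_sum fun k hk =>
          htr ξ hξ (k + 1) (by omega) (by have := Finset.mem_range.1 hk; omega)
      _ = M' * κ (V ξ) := by simp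
      _ ≤ _ := by gcongr; omega
  induction N using Nat.strong_induction_on with
  | _ N ih =>
    intro ξ hξ
    by_cases h : N ≤ M
    · refine ⟨q ξ, adm_mono h ξ _ (hadm ξ hξ), ?_⟩
      calc cost V g N ξ (q ξ) ≤ cost V g M ξ (q ξ) :=
            Finset.sum_le_sum_of_subset (Finset.range_mono h)
        _ ≤ V ξ + M * κ (V ξ) := hcost ξ hξ
        _ ≤ V ξ + M * κ (V ξ) + ρ (c * V ξ) := le_self_add
        _ ≤ _ := hκρ _
    · obtain ⟨l, rfl⟩ : ∃ l, N = M + l := ⟨N - M, by omega⟩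
      obtain ⟨v, hv, hvc⟩ := ih l (by omega) (iter g ξ (q ξ) M)
        (hq.2.1 ξ hξ M hM le_rfl)
      refine ⟨cat M (q ξ) v, adm_cat M l ξ _ v (hadm ξ hξ) hv, ?_⟩
      rw [cost_cat]
      calc _ ≤ (V ξ + M * κ (V ξ)) + ρ (c * V ξ) :=
            add_le_add (hcost ξ hξ) (hvc.trans (hρ (hdecay ξ hξ)))
        _ ≤ _ := hκρ _

/-- One step of relaxed dynamic programming. -/
theorem mpc_step (ρ : ℝ≥0 → ℝ≥0) (hρ : Monotone ρ)
    (hcheap : ∀ N, ∀ ξ ∈ X, ∃ u, Adm X U g ξ N u ∧ cost V g N ξ u ≤ ρ (V ξ))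
    (N : ℕ) (hN : 1 ≤ N) (uo : (Fin n → ℝ) → ℕ → Fin m → ℝ)
    (ho : IsOptSel X U g V (N + 1) uo) (ξ : Fin n → ℝ) (hξ : ξ ∈ X) :
    g ξ (uo ξ 0) ∈ X ∧
    cost V g (N + 1) (g ξ (uo ξ 0)) (uo (g ξ (uo ξ 0))) + V ξ
      ≤ cost V g (N + 1) ξ (uo ξ) + ρ (cost V g (N + 1) ξ (uo ξ) / N) := by
  obtain ⟨hadm, -⟩ := ho ξ hξ
  have hx1 : iter g ξ (uo ξ) 1 = g ξ (uo ξ 0) := rfl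
  have hx1X : g ξ (uo ξ 0) ∈ X := adm_mem ξ hξ _ hadm 1 (by omega)
  refine ⟨hx1X, ?_⟩
  set J := cost V g (N + 1) ξ (uo ξ) with hJ
  have hN0 : (0 : ℝ≥0) < N := by exact_mod_cast hN
  -- pigeonhole
  obtain ⟨k, hk, hkV⟩ : ∃ k ∈ Finset.range N, V (iter g ξ (uo ξ) (k + 1)) ≤ J / N := by
    refine Finset.exists_le_of_sum_le (s := Finset.range N) ⟨0, Finset.mem_range.2 hN⟩ ?_
    have h1 : J = ∑ i ∈ Finset.range N, V (iter g ξ (uo ξ) (i + 1)) + V (iter g ξ (uo ξ) 0) :=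
      Finset.sum_range_succ' _ _
    have h2 : ∑ i ∈ Finset.range N, J / (N : ℝ≥0) = J := by
      simp only [Finset.sum_const, Finset.card_range, nsmul_eq_mul]
      field_simp
    rw [h2, h1]
    exact le_self_add
  have hk' := Finset.mem_range.1 hk
  obtain ⟨l, rfl⟩ : ∃ l, N = k + l := ⟨N - k, by omega⟩
  have hxk : iter g ξ (uo ξ) (k + 1) = iter g (g ξ (uo ξ 0)) (fun i => uo ξ (1 + i)) k := by
    rw [Nat.add_comm, iter_shift, hx1]
  have hxkX : iter g ξ (uo ξ) (k + 1) ∈ X := adm_mem ξ hξ _ hadm _ (by omega)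
  obtain ⟨v, hv, hvc⟩ := hcheap (l + 1) _ hxkX
  have hpre : Adm X U g (g ξ (uo ξ 0)) k (fun i => uo ξ (1 + i)) := by
    have := adm_shift 1 k ξ (uo ξ) (adm_mono (by omega) ξ _ hadm)
    rwa [hx1] at this
  have hca : Adm X U g (g ξ (uo ξ 0)) (k + l + 1) (cat k (fun i => uo ξ (1 + i)) v) := by
    rw [Nat.add_assoc]
    refine adm_cat k (l + 1) _ _ v hpre ?_
    rwa [← hxk]
  have hle := (ho _ hx1X).2 _ hca
  have e1 : cost V g (k + l + 1) (g ξ (uo ξ 0)) (cat k (fun i => uo ξ (1 + i)) v)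
      = cost V g k (g ξ (uo ξ 0)) (fun i => uo ξ (1 + i))
        + cost V g (l + 1) (iter g ξ (uo ξ) (k + 1)) v := by
    rw [Nat.add_assoc, cost_cat, ← hxk]
  have e2 : V ξ + cost V g k (g ξ (uo ξ 0)) (fun i => uo ξ (1 + i)) ≤ J := by
    calc _ = cost V g (1 + k) ξ (uo ξ) := by rw [cost_add, cost_one, hx1]
      _ ≤ J := Finset.sum_le_sum_of_subset (Finset.range_mono (by omega))
  calc _ ≤ (cost V g k (g ξ (uo ξ 0)) (fun i => uo ξ (1 + i))
        + ρ (V (iter g ξ (uo ξ) (k + 1)))) + V ξ := by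
        rw [e1] at hle
        gcongr
        exact hle.trans (by gcongr)
    _ = (V ξ + cost V g k (g ξ (uo ξ 0)) (fun i => uo ξ (1 + i)))
        + ρ (V (iter g ξ (uo ξ) (k + 1))) := by ring
    _ ≤ _ := add_le_add e2 (hρ hkV)

/-- Sequence lemma. -/
theorem seq_bound (ρ : ℝ≥0 → ℝ≥0) (hρ : Monotone ρ) (hρge : ∀ r, r ≤ ρ r)
    (J v : ℕ → ℝ≥0) (hJ : ∀ t, J t ≤ ρ (v t)) (ε η K D : ℝ≥0)
    (hη : ρ (2 * ε) + ε ≤ η) (hηK : η ≤ K) (hD : 0 < D) (hK : ρ (K / D) ≤ ε)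
    (hJ0 : J 0 ≤ K) (hstep : ∀ t, J (t + 1) + v t ≤ J t + ρ (J t / D)) (t : ℕ) :
    J t ≤ max (ρ (4 * J 0 / (t + 1))) η := by
  have hstep1 : ∀ t L, η ≤ L → J t ≤ L → J t ≤ K → J (t + 1) ≤ L := by
    intro t L hL hJL hJK
    have h1 : ρ (J t / D) ≤ ε := (hρ (by gcongr)).trans hK
    have h2 := (hstep t).trans (add_le_add le_rfl h1)
    by_cases hv : ε ≤ v t
    · have h3 : J (t + 1) + ε ≤ J t + ε := (add_le_add le_rfl hv).trans h2
      exact (le_of_add_le_add_right h3).trans hJL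
    · calc J (t + 1) ≤ J (t + 1) + v t := le_self_add
        _ ≤ J t + ε := h2
        _ ≤ ρ (2 * ε) + ε := by
          gcongr
          refine (hJ t).trans (hρ ((not_le.1 hv).le.trans ?_))
          rw [two_mul]; exact le_self_add
        _ ≤ η := hη
        _ ≤ L := hL
  have hJK : ∀ t, J t ≤ K := by
    intro t
    induction t with
    | zero => exact hJ0
    | succ t ih => exact hstep1 t K hηK ih ih
  have hstep2 : ∀ t, J (t + 1) + v t ≤ J t + ε := fun t =>
    (hstep t).trans (add_le_add le_rfl ((hρ (by gcongr; exact hJK t)).trans hK))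
  have hinv : ∀ s, J s ≤ η → ∀ j, J (s + j) ≤ η := by
    intro s hs j
    induction j with
    | zero => exact hs
    | succ j ih => exact hstep1 (s + j) η le_rfl ih (hJK _)
  by_cases hex : ∃ s < t, v s < 2 * ε
  · obtain ⟨s, hst, hs⟩ := hex
    have h1 : J (s + 1) ≤ η := by
      calc J (s + 1) ≤ J (s + 1) + v s := le_self_add
        _ ≤ J s + ε := hstep2 s
        _ ≤ ρ (2 * ε) + ε := by gcongr; exact (hJ s).trans (hρ hs.le)
        _ ≤ η := hη
    have h2 := hinv (s + 1) h1 (t - (s + 1))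
    rw [show s + 1 + (t - (s + 1)) = t by omega] at h2
    exact le_max_of_le_right h2
  · push Not at hex
    refine le_max_of_le_left ?_
    -- decrease by v/2
    have hdec : ∀ s < t, 2 * J (s + 1) + v s ≤ 2 * J s := by
      intro s hs
      have h1 := hstep2 s
      have h2 := hex s hs
      rw [← NNReal.coe_le_coe] at h1 h2 ⊢
      push_cast at h1 h2 ⊢
      linarith
    have hanti : ∀ j, ∀ s, s + j ≤ t → J (s + j) ≤ J s := by
      intro j
      induction j with
      | zero => intro s _; exact le_rfl
      | succ j ih =>
        intro s hs
        have h1 := hdec (s + j) (by omega)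
        have h2 := ih s (by omega)
        have h3 : 2 * J (s + j + 1) ≤ 2 * J (s + j) := le_self_add.trans h1
        have h4 : J (s + j + 1) ≤ J (s + j) := le_of_mul_le_mul_left h3 (by norm_num)
        exact h4.trans h2
    have hsum : ∀ k ≤ t, 2 * J k + ∑ s ∈ Finset.range k, v s ≤ 2 * J 0 := by
      intro k
      induction k with
      | zero => intro _; simp
      | succ k ih =>
        intro hk
        rw [Finset.sum_range_succ]
        calc _ = (2 * J (k + 1) + v k) + ∑ s ∈ Finset.range k, v s := by ring
          _ ≤ 2 * J k + ∑ s ∈ Finset.range k, v s := by gcongr; exact hdec k (by omega)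
          _ ≤ _ := ih (by omega)
    rcases Nat.eq_zero_or_pos t with rfl | ht
    · refine (hρge _).trans (hρ ?_)
      simp only [Nat.cast_zero, zero_add, div_one]
      exact le_mul_of_one_le_left (zero_le) (by norm_num)
    · obtain ⟨s, hs, hsv⟩ : ∃ s ∈ Finset.range t, v s ≤ 4 * J 0 / (t + 1) := by
        refine Finset.exists_le_of_sum_le (s := Finset.range t) ⟨0, Finset.mem_range.2 ht⟩ ?_
        have h1 : ∑ s ∈ Finset.range t, v s ≤ 2 * J 0 := le_add_self.trans (hsum t le_rfl)
        refine h1.trans ?_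
        simp only [Finset.sum_const, Finset.card_range, nsmul_eq_mul]
        rw [← mul_div_assoc, le_div_iff₀ (by positivity)]
        have h2 : (1 : ℝ≥0) ≤ t := by exact_mod_cast ht
        calc 2 * J 0 * (t + 1) ≤ 2 * J 0 * (t + t) := by gcongr
          _ = _ := by ring
      have hs' := Finset.mem_range.1 hs
      have h1 := hanti (t - s) s (by omega)
      rw [show s + (t - s) = t by omega] at h1
      exact h1.trans ((hJ s).trans (hρ hsv))

theorem exists_rho (c : ℝ≥0) (hc : c < 1) (M : ℕ) (κ : ℝ≥0 → ℝ≥0) (a b : ℝ) (q₀ : ℝ≥0)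
    (ha : 0 < a) (hb : 0 < b) (hκ : ∀ r : ℝ≥0, κ r ≤ q₀ * max (r ^ a) (r ^ b)) :
    ∃ ρ : ℝ≥0 → ℝ≥0, Continuous ρ ∧ StrictMono ρ ∧ ρ 0 = 0 ∧ (∀ r, r ≤ ρ r) ∧
      ∀ r, r + M * κ r + ρ (c * r) ≤ ρ r := by
  have key : ∀ d : ℝ≥0, d < 1 → ∀ L : ℝ≥0, ∃ K : ℝ≥0, L + K * d = K := by
    intro d hd L
    refine ⟨L / (1 - d), ?_⟩
    have h1 : 0 < 1 - d := tsub_pos_of_lt hd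
    have h2 : (1 - d) + d = 1 := tsub_add_cancel_of_le hd.le
    have h3 : L / (1 - d) * (1 - d) = L := div_mul_cancel₀ _ h1.ne'
    calc L + L / (1 - d) * d = L / (1 - d) * (1 - d) + L / (1 - d) * d := by rw [h3]
      _ = L / (1 - d) * ((1 - d) + d) := by ring
      _ = _ := by rw [h2, mul_one]
  obtain ⟨K1, h1⟩ := key c hc 1
  obtain ⟨K2, h2⟩ := key (c ^ a) (NNReal.rpow_lt_one hc ha) (M * q₀)
  obtain ⟨K3, h3⟩ := key (c ^ b) (NNReal.rpow_lt_one hc hb) (M * q₀)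
  have hK1 : 1 ≤ K1 := by rw [← h1]; exact le_self_add
  have hca := NNReal.continuous_rpow_const ha.le
  have hcb := NNReal.continuous_rpow_const hb.le
  refine ⟨fun r => K1 * r + K2 * r ^ a + K3 * r ^ b, by fun_prop, ?_, ?_, ?_, ?_⟩
  · intro r s hrs
    have e1 : K1 * r < K1 * s := mul_lt_mul_of_pos_left hrs (lt_of_lt_of_le one_pos hK1)
    have e2 : K2 * r ^ a ≤ K2 * s ^ a := by gcongr
    have e3 : K3 * r ^ b ≤ K3 * s ^ b := by gcongr
    exact add_lt_add_of_lt_of_le (add_lt_add_of_lt_of_le e1 e2) e3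
  · simp [NNReal.zero_rpow ha.ne', NNReal.zero_rpow hb.ne']
  · intro r
    calc r ≤ K1 * r := le_mul_of_one_le_left (zero_le) hK1
      _ ≤ K1 * r + K2 * r ^ a + K3 * r ^ b := by rw [add_assoc]; exact le_self_add
  · intro r
    have e : κ r ≤ q₀ * (r ^ a + r ^ b) :=
      (hκ r).trans (by gcongr; exact max_le le_self_add le_add_self)
    simp only [NNReal.mul_rpow]
    calc _ ≤ r + M * (q₀ * (r ^ a + r ^ b))
          + (K1 * (c * r) + K2 * (c ^ a * r ^ a) + K3 * (c ^ b * r ^ b)) := by gcongr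
      _ = (1 + K1 * c) * r + (M * q₀ + K2 * c ^ a) * r ^ a
          + (M * q₀ + K3 * c ^ b) * r ^ b := by ring
      _ ≤ _ := by rw [h1, h2, h3]

theorem classKInf_surj (κ : ℝ≥0 → ℝ≥0) (h : ClassKInf κ) : Function.Surjective κ := by
  intro y
  obtain ⟨x, hx⟩ := (h.2.eventually_ge_atTop y).exists
  have := intermediate_value_Icc (zero_le (a := x)) h.1.1.continuousOn
  rw [h.1.2.2] at this
  obtain ⟨z, -, hz⟩ := this ⟨zero_le, hx⟩
  exact ⟨z, hz⟩

theorem tendsto_nn_div (K : ℝ≥0) : Tendsto (fun s : ℝ≥0 => K / s) atTop (nhds 0) := by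
  have h : Tendsto (fun s : ℝ≥0 => (K : ℝ) / (s : ℝ)) atTop (nhds 0) :=
    Tendsto.const_div_atTop (NNReal.tendsto_coe_atTop.2 tendsto_id) (K : ℝ)
  rw [← NNReal.tendsto_coe]
  simpa using h

theorem tendsto_nn_div_succ (K : ℝ≥0) :
    Tendsto (fun s : ℝ≥0 => K / (s + 1)) atTop (nhds 0) := by
  have h1 : Tendsto (fun s : ℝ≥0 => s + 1) atTop atTop :=
    tendsto_atTop_mono (fun s => le_self_add) tendsto_id
  exact (tendsto_nn_div K).comp h1

end Helpers

/-- (Theorem (ii): with linear decay `c ∈ [0,1)` and transient bound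
`κ̂(r) ≤ q₀·max{r^a, r^b}`, the classic MPC scheme is semiglobally practically
asymptotically ω-stabilizing w.r.t. the optimization horizon `N`). -/
theorem mpc_power_transient_practically_stable {n m : ℕ}
    (X : Set (Fin n → ℝ)) (U : Set (Fin m → ℝ))
    (g : (Fin n → ℝ) → (Fin m → ℝ) → (Fin n → ℝ))
    (hg : ContinuousOn (fun p : (Fin n → ℝ) × (Fin m → ℝ) => g p.1 p.2) (X ×ˢ U))
    (ω : (Fin n → ℝ) → ℝ≥0) (hω : Continuous ω) (hωzero : ∃ x, ω x = 0)
    (M : ℕ) (hM : 1 ≤ M)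
    (V : (Fin n → ℝ) → ℝ≥0) (hV : Continuous V)
    (ulα olα : ℝ≥0 → ℝ≥0) (hulα : ClassKInf ulα) (holα : ClassKInf olα)
    (hsandwich : ∀ ξ, ulα (ω ξ) ≤ V ξ ∧ V ξ ≤ olα (ω ξ))
    (q : (Fin n → ℝ) → ℕ → Fin m → ℝ) (hq : IsAfcl ω X U g M q)
    -- linear decay along the afcl `q`
    (c : ℝ≥0) (hc : c < 1)
    (hdecay : ∀ ξ ∈ X, V (iter g ξ (q ξ) M) ≤ c * V ξ)
    -- transient bound `V(g^i(ξ,q(ξ))) ≤ κ̂(V(ξ))` with `κ̂(r) ≤ q₀·max{r^a, r^b}`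
    (κhat : ℝ≥0 → ℝ≥0)
    (htransient : ∀ ξ ∈ X, ∀ i : ℕ, 1 ≤ i → i < M → V (iter g ξ (q ξ) i) ≤ κhat (V ξ))
    (a b : ℝ) (q₀ : ℝ≥0) (ha : 0 < a) (hb : 0 < b) (hq₀ : 0 < q₀)
    (hκhat : ∀ r : ℝ≥0, κhat r ≤ q₀ * max (r ^ a) (r ^ b))
    -- a selection of optimal control sequences for every horizon `N ∈ ℕ*`
    (uopt : ℕ → (Fin n → ℝ) → ℕ → Fin m → ℝ)
    (hopt : ∀ N : ℕ, 1 ≤ N → IsOptSel X U g V N (uopt N)) :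
    -- semiglobal practical asymptotic ω-stabilization w.r.t. the horizon `N`
    ∃ β : ℝ≥0 → ℝ≥0 → ℝ≥0, ClassKL β ∧
      ∀ δ : ℝ≥0, 0 < δ → ∀ Δ : ℝ≥0, δ < Δ → ∃ N₀ : ℕ, 1 ≤ N₀ ∧
        ∀ N : ℕ, N₀ ≤ N → ∀ ξ ∈ X, ω ξ < Δ →
          ∀ t : ℕ, ω (mpcLoop g (uopt N) ξ t) ≤ max (β (ω ξ) (t : ℝ≥0)) δ := by
  obtain ⟨ρ, hρc, hρs, hρ0, hρge, hρκ⟩ := exists_rho c hc M κhat a b q₀ ha hb hκhat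
  have hcheap := exists_cheap (X := X) (U := U) (g := g) (V := V) ω M hM q hq c hdecay κhat ρ
    hρs.monotone htransient hρκ
  set e : ℝ≥0 ≃o ℝ≥0 :=
    StrictMono.orderIsoOfSurjective ulα hulα.1.2.1 (classKInf_surj ulα hulα) with he
  have heq : ∀ x, e x = ulα x := fun x => rfl
  have hic : Continuous e.symm := e.symm.continuous
  have hi0 : e.symm 0 = 0 := by
    rw [OrderIso.symm_apply_eq, heq, hulα.1.2.2]
  have holc : Continuous olα := holα.1.1
  refine ⟨fun r s => e.symm (ρ (4 * ρ (olα r) / (s + 1))), ⟨?_, ?_, ?_⟩, ?_⟩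
  · have : Continuous fun p : ℝ≥0 × ℝ≥0 => 4 * ρ (olα p.1) / (p.2 + 1) := by
      refine Continuous.div (by fun_prop) (by fun_prop) fun p => ?_
      positivity
    exact hic.comp (hρc.comp this)
  · intro s
    refine ⟨?_, ?_, ?_⟩
    · have : Continuous fun r : ℝ≥0 => 4 * ρ (olα r) / (s + 1) := by fun_prop
      exact hic.comp (hρc.comp this)
    · intro r r' hr
      refine e.symm.strictMono (hρs ?_)
      have h1 : ρ (olα r) < ρ (olα r') := hρs (holα.1.2.1 hr)
      have h2 : (0 : ℝ≥0) < s + 1 := by positivity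
      have h3 : (0 : ℝ≥0) < 4 := by norm_num
      exact div_lt_div_of_pos_right (mul_lt_mul_of_pos_left h1 h3) h2
    · simp [holα.1.2.2, hρ0, hi0]
  · intro r
    constructor
    · intro s s' hs
      refine e.symm.monotone (hρs.monotone ?_)
      gcongr
    · have h1 : Tendsto (fun s : ℝ≥0 => 4 * ρ (olα r) / (s + 1)) atTop (nhds 0) :=
        tendsto_nn_div_succ _
      have h2 := (hic.comp hρc).tendsto 0
      simp only [Function.comp, hρ0, hi0] at h2
      exact h2.comp h1
  · intro δ hδ Δ _
    set η := ulα δ with hη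
    have hη0 : 0 < η := by
      have := hulα.1.2.1 hδ
      rwa [hulα.1.2.2] at this
    obtain ⟨ε, hε0, hε⟩ : ∃ ε : ℝ≥0, 0 < ε ∧ ρ (2 * ε) + ε ≤ η := by
      have h1 : Tendsto (fun n : ℕ => ρ (2 * (1 / ((n : ℝ≥0) + 1))) + 1 / ((n : ℝ≥0) + 1))
          atTop (nhds 0) := by
        have h2 : Continuous fun x : ℝ≥0 => ρ (2 * x) + x := by fun_prop
        have h3 := h2.tendsto 0
        simp only [mul_zero, hρ0, add_zero] at h3
        exact h3.comp tendsto_one_div_add_atTop_nhds_zero_nat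
      obtain ⟨k, hk⟩ := (h1.eventually (gt_mem_nhds hη0)).exists
      exact ⟨1 / ((k : ℝ≥0) + 1), by positivity, hk.le⟩
    set K := max (ρ (olα Δ)) η with hK
    obtain ⟨N₁, hN₁⟩ : ∃ N₁ : ℕ, ∀ k : ℕ, N₁ ≤ k → ρ (K / k) ≤ ε := by
      have h1 : Tendsto (fun k : ℕ => ρ (K / (k : ℝ≥0))) atTop (nhds 0) := by
        have h3 := hρc.tendsto 0
        rw [hρ0] at h3
        have h4 : Tendsto (fun k : ℕ => K / (k : ℝ≥0)) atTop (nhds 0) :=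
          (tendsto_nn_div K).comp tendsto_natCast_atTop_atTop
        exact h3.comp h4
      obtain ⟨k, hk⟩ := eventually_atTop.1 (h1.eventually (gt_mem_nhds hε0))
      exact ⟨k, fun j hj => (hk j hj).le⟩
    refine ⟨N₁ + 2, by omega, ?_⟩
    intro N hN ξ hξ hξΔ t
    obtain ⟨N', rfl⟩ : ∃ N', N = N' + 1 := ⟨N - 1, by omega⟩
    have ho := hopt (N' + 1) (by omega)
    set uo := uopt (N' + 1) with huo
    have hstep := mpc_step ρ hρs.monotone hcheap N' (by omega) uo ho
    have hX : ∀ t, mpcLoop g uo ξ t ∈ X := by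
      intro t
      induction t with
      | zero => exact hξ
      | succ t ih => exact (hstep _ ih).1
    have hJρ : ∀ x ∈ X, cost V g (N' + 1) x (uo x) ≤ ρ (V x) := by
      intro x hx
      obtain ⟨u, hu, huc⟩ := hcheap (N' + 1) x hx
      exact ((ho x hx).2 u hu).trans huc
    have hJ0 : cost V g (N' + 1) ξ (uo ξ) ≤ ρ (olα (ω ξ)) :=
      (hJρ ξ hξ).trans (hρs.monotone (hsandwich ξ).2)
    have hb := seq_bound ρ hρs.monotone hρge
      (fun t => cost V g (N' + 1) (mpcLoop g uo ξ t) (uo (mpcLoop g uo ξ t)))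
      (fun t => V (mpcLoop g uo ξ t)) (fun t => hJρ _ (hX t)) ε η K N' hε (le_max_right _ _)
      (by exact_mod_cast (by omega : 0 < N')) (hN₁ N' (by omega))
      (hJ0.trans ((hρs.monotone (holα.1.2.1.monotone hξΔ.le)).trans (le_max_left _ _)))
      (fun t => (hstep _ (hX t)).2) t
    have hVJ : V (mpcLoop g uo ξ t)
        ≤ cost V g (N' + 1) (mpcLoop g uo ξ t) (uo (mpcLoop g uo ξ t)) := by
      rw [← cost_one (V := V) (g := g) (mpcLoop g uo ξ t) (uo (mpcLoop g uo ξ t))]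
      exact Finset.sum_le_sum_of_subset (Finset.range_mono (by omega))
    have hfin : ulα (ω (mpcLoop g uo ξ t))
        ≤ max (ρ (4 * ρ (olα (ω ξ)) / (t + 1))) η := by
      refine (hsandwich _).1.trans (hVJ.trans (hb.trans (max_le_max ?_ le_rfl)))
      refine hρs.monotone ?_
      gcongr
      exact hJ0
    rcases le_max_iff.1 hfin with h | h
    · refine le_max_of_le_left ?_
      rw [OrderIso.le_symm_apply]
      exact h
    · exact le_max_of_le_right (hulα.1.2.1.le_iff_le.1 h)
end
end

section
/- Let α : [0,∞) → [0,∞) be of class K∞ with α(r) < r for all r > 0, let M ∈ ℕ*, and let χ be of class K∞ with χ^M = α (M-fold composition). Then for every t ∈ ℕ written as t = kM + j with k ∈ ℕ and j ∈ {0,…,M−1}, and for every r ≥ 0, one has α^k(r) ≤ χ^t(α⁻¹(r)), where α⁻¹ denotes the inverse of α on [0,∞) and α^k the k-fold composition of α. -/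
open Filter Finset NNReal

noncomputable section

/-- for `α ∈ K∞` with `α(r) < r` on `(0,∞)`, `χ ∈ K∞` with `χ^M = α`,
and `t = kM + j` with `j ∈ {0,…,M-1}`, one has `α^k(r) ≤ χ^t(α⁻¹(r))` for all `r ≥ 0`. -/
theorem iterate_interpolation_bound
    (α : ℝ≥0 → ℝ≥0) (hα : ClassKInf α) (hαlt : ∀ r : ℝ≥0, 0 < r → α r < r)
    (M : ℕ) (hM : 1 ≤ M)
    (χ : ℝ≥0 → ℝ≥0) (hχ : ClassKInf χ) (hχM : χ^[M] = α)
    (αinv : ℝ≥0 → ℝ≥0)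
    (hinvl : Function.LeftInverse αinv α) (hinvr : Function.RightInverse αinv α) :
    ∀ t k j : ℕ, j < M → t = k * M + j →
      ∀ r : ℝ≥0, α^[k] r ≤ χ^[t] (αinv r) := by
  intro t k j hj ht r
  have hle : ∀ x, χ x ≤ x := by
    intro x
    by_contra h
    have h := not_le.mp h
    have hx : 0 < x := by
      rcases eq_or_ne x 0 with h0 | h0
      · subst h0
        rw [hχ.1.2.2] at h
        exact absurd h (lt_irrefl _)
      · exact pos_iff_ne_zero.mpr h0
    have hmono : Monotone (fun n => χ^[n] x) :=
      hχ.1.2.1.monotone.monotone_iterate_of_le_map h.le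
    have h1 : x ≤ χ^[M] x := hmono (Nat.zero_le M)
    rw [hχM] at h1
    exact absurd (hαlt x hx) (not_lt.mpr h1)
  have hanti : Antitone (fun n => χ^[n] (αinv r)) :=
    hχ.1.2.1.monotone.antitone_iterate_of_map_le (hle _)
  have h2 : α^[k] r = χ^[M * (k + 1)] (αinv r) := by
    rw [Function.iterate_mul, hχM, Function.iterate_succ_apply, hinvr r]
  rw [h2]
  apply hanti
  rw [ht]
  nlinarith
end
end

section
/- Let M ∈ ℕ*, let ρ, κ̂ : [0,∞) → [0,∞) be of class K∞, let λ ∈ (0,1), and let (v_i)_{i ∈ ℕ} be a sequence of nonnegative real numbers such that ρ(κ̂(v_{kM})) ≤ λ^k · ρ(κ̂(v_0)) for all k ∈ ℕ and v_{kM+j} ≤ κ̂(v_{kM}) for all k ∈ ℕ and j ∈ {0,…,M−1}. Then, with σ := ρ ∘ κ̂ ∘ ρ⁻¹ (a class-K∞ function), one has ρ(v_{kM+j}) ≤ λ^k · σ(ρ(v_0)) for all k ∈ ℕ, j ∈ {0,…,M−1}, and consequently Σ_{i=0}^{N−1} ρ(v_i) ≤ (M/(1−λ)) · σ(ρ(v_0))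 for every N ∈ ℕ*. -/
open Filter Finset NNReal

noncomputable section

/-- the decay-transfer estimate for the rescaled running cost:
if `ρ(κ̂(v_{kM})) ≤ λ^k·ρ(κ̂(v_0))` and `v_{kM+j} ≤ κ̂(v_{kM})`, then with
`σ := ρ ∘ κ̂ ∘ ρ⁻¹ ∈ K∞` one has `ρ(v_{kM+j}) ≤ λ^k·σ(ρ(v_0))` and
`Σ_{i=0}^{N-1} ρ(v_i) ≤ (M/(1-λ))·σ(ρ(v_0))`. -/
theorem rescaled_decay_transfer
    (M : ℕ) (hM : 1 ≤ M)
    (ρ κhat : ℝ≥0 → ℝ≥0) (hρ : ClassKInf ρ) (hκhat : ClassKInf κhat)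
    (ρinv : ℝ≥0 → ℝ≥0)
    (hinvl : Function.LeftInverse ρinv ρ) (hinvr : Function.RightInverse ρinv ρ)
    (lam : ℝ≥0) (hlam0 : 0 < lam) (hlam1 : lam < 1)
    (v : ℕ → ℝ≥0)
    (hdecay : ∀ k : ℕ, ρ (κhat (v (k * M))) ≤ lam ^ k * ρ (κhat (v 0)))
    (htransient : ∀ k j : ℕ, j < M → v (k * M + j) ≤ κhat (v (k * M))) :
    ClassKInf (fun r => ρ (κhat (ρinv r))) ∧
    (∀ k j : ℕ, j < M →
      ρ (v (k * M + j)) ≤ lam ^ k * ρ (κhat (ρinv (ρ (v 0))))) ∧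
    (∀ N : ℕ, 1 ≤ N →
      ∑ i ∈ Finset.range N, ρ (v i) ≤
        ((M : ℝ≥0) / (1 - lam)) * ρ (κhat (ρinv (ρ (v 0))))) := by
  obtain ⟨⟨hρc, hρm, hρ0⟩, hρt⟩ := hρ
  obtain ⟨⟨hκc, hκm, hκ0⟩, hκt⟩ := hκhat
  let e : ℝ≥0 ≃o ℝ≥0 := StrictMono.orderIsoOfRightInverse ρ hρm ρinv hinvr
  have hinvc : Continuous ρinv := e.symm.continuous
  have hinvm : StrictMono ρinv := e.symm.strictMono
  have hinvt : Tendsto ρinv atTop atTop := e.symm.tendsto_atTop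
  have hinv0 : ρinv 0 = 0 := by
    have h := hinvl 0
    rwa [hρ0] at h
  have key : ∀ k j : ℕ, j < M →
      ρ (v (k * M + j)) ≤ lam ^ k * ρ (κhat (ρinv (ρ (v 0)))) := by
    intro k j hj
    rw [hinvl]
    exact (hρm.monotone (htransient k j hj)).trans (hdecay k)
  refine ⟨⟨⟨hρc.comp (hκc.comp hinvc), hρm.comp (hκm.comp hinvm), ?_⟩,
    hρt.comp (hκt.comp hinvt)⟩, key, ?_⟩
  · simp only [hinv0, hκ0, hρ0]
  intro N _
  generalize ρ (κhat (ρinv (ρ (v 0)))) = S at key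
  have blocks : ∀ K : ℕ, ∑ i ∈ Finset.range (K * M), ρ (v i) ≤
      (M : ℝ≥0) * (∑ k ∈ Finset.range K, lam ^ k) * S := by
    intro K
    induction K with
    | zero => simp
    | succ K ih =>
      rw [Nat.succ_mul, Finset.sum_range_add, Finset.sum_range_succ]
      have h : ∑ j ∈ Finset.range M, ρ (v (K * M + j)) ≤ (M : ℝ≥0) * (lam ^ K * S) := by
        calc _ ≤ ∑ j ∈ Finset.range M, lam ^ K * S :=
              Finset.sum_le_sum fun j hj => key K j (Finset.mem_range.mp hj)
          _ = _ := by simp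
      calc _ ≤ _ := add_le_add ih h
        _ = _ := by ring
  have geom : ∑ k ∈ Finset.range N, lam ^ k ≤ (1 - lam)⁻¹ := by
    rw [← tsum_geometric_nnreal hlam1]
    exact (NNReal.summable_geometric hlam1).sum_le_tsum _ (fun _ _ => zero_le)
  calc ∑ i ∈ Finset.range N, ρ (v i) ≤ ∑ i ∈ Finset.range (N * M), ρ (v i) :=
        Finset.sum_le_sum_of_subset
          (Finset.range_mono (Nat.le_mul_of_pos_right N hM))
    _ ≤ (M : ℝ≥0) * (∑ k ∈ Finset.range N, lam ^ k) * S := blocks N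
    _ ≤ (M : ℝ≥0) * (1 - lam)⁻¹ * S := by gcongr
    _ = _ := by rw [div_eq_mul_inv]
end
end
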